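/- arXiv:1108.0136 — 5 statements merged into one kernel-verified Lean document; each statement's English description precedes it below -/
import Mathlib

section
/- Let v be an admissible velocity field on [0,T] × ℝ^D, let t ∈ (0,T), and let b, L > 0. Suppose x ∈ 𝔹_t(b), i.e. τ(x) > t and X_s(x) lies in the open ball D_b of radius b about the origin for all s ∈ [0,t]. If y ∈ ℝ^D satisfies |y − x| < L·exp(−∫_0^t f_{K}(s) ds), where K is the closed ball of radius b + L, then τ(y) > t, |X_s(y) − X_s(x)| < L for all s ∈ [0,t], and hence X_s(y) ∈ D_{b+L} for all s ∈ [0,t]. Consequently, for each t ∈ (0,T) and b > 0 the set 𝔹_t(b) = { x ∈ ℝ^D : τ(x) > t and X_s(x) ∈ D_b for all s ∈ [0,t] } is open. -/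
/-!
Write `K` for the closed ball of radius `b + L` and `f = f_K`. Composing `v` with the metric
projection onto `K`, which is `1`-Lipschitz, gives a field `w` on all of `ℝ^D` that agrees with `v`
on `K` and satisfies `‖w_t(x)‖ ≤ f(t)` and `Lip(w_t) ≤ f(t)` globally.

* Such a field has a solution `Z` from `y` on the whole of `[0,T]`: with `F(s) = ∫_0^s f`, the
  Picard map is a `1/2`-contraction for the weighted norm `sup e^{-2F}|Z|`
  (`exists_global_solution`).
* Since `X(·,x)` stays in `K`, it also solves the equation of `w` on `[0,t]`, and Grönwall's
  inequality with an `L¹` kernel (`gronwall_L1`) gives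
  `|Z_s - X_s(x)| ≤ |y - x| e^{F(s)} < L` on `[0,t]`.
* So `Z` stays in the open ball of radius `b + L` on `[0,t]` and, by continuity, slightly beyond;
  there it solves the original equation, and maximality of the flow identifies it with `X(·,y)`
  and gives `t < τ(y)`.

Working with the truncated equation avoids any continuation argument for `X(·,y)`. Both estimates
rest on `∫_0^s c f e^{cF} = e^{cF(s)} - 1` (`integral_mul_exp`), the fundamental theorem of
calculus for an absolutely continuous function. Openness of `𝔹_t(b)` follows because, by
compactness, a trajectory in `D_b` on `[0,t]` already lies in a smaller ball `D_{b'}`; take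
`L = b - b'`.
-/

open MeasureTheory Set Filter Topology

noncomputable section

/-- `D`-dimensional Euclidean space. -/
abbrev Euc (D : ℕ) := EuclideanSpace ℝ (Fin D)

/-- The least Lipschitz constant of `f` on the set `K` (junk value if `f` is not
Lipschitz on `K`). -/
def lipOn {D : ℕ} (f : Euc D → Euc D) (K : Set (Euc D)) : ℝ :=
  sInf {C : ℝ | 0 ≤ C ∧ LipschitzOnWith C.toNNReal f K}

/-- `f_K(t) = sup_{x ∈ K} |v_t(x)| + Lip(v_t, K)`. -/
def fks {D : ℕ} (v : ℝ → Euc D → Euc D) (K : Set (Euc D)) (t : ℝ) : ℝ :=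
  sSup ((fun x => ‖v t x‖) '' K) + lipOn (v t) K

/-- An admissible velocity field on `[0,T] × ℝ^D`. -/
structure IsAdmissible {D : ℕ} (T : ℝ) (v : ℝ → Euc D → Euc D) : Prop where
  meas : ∀ x : Euc D, Measurable fun t => v t x
  locLip : ∀ t ∈ Icc (0:ℝ) T, LocallyLipschitz (v t)
  integ : ∀ K : Set (Euc D), IsCompact K → IntegrableOn (fks v K) (Ioc 0 T) volume

/-- A solution of the ODE `Ẋ = v_t(X)`, `X_0 = x`, on the interval `[0, σ)`, in
integral form. -/
def IsSolOn {D : ℕ} (v : ℝ → Euc D → Euc D) (x : Euc D) (σ : ℝ) (X : ℝ → Euc D) : Prop :=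
  ContinuousOn X (Ico 0 σ) ∧ ∀ t ∈ Ico (0:ℝ) σ, X t = x + ∫ s in (0:ℝ)..t, v s (X s)

/-- The maximal flow of an admissible velocity field: `X t x` is the value at time `t`
of the unique maximal solution starting at `x`, and `tau x` is its maximal existence
time. -/
structure MaxFlow {D : ℕ} (T : ℝ) (v : ℝ → Euc D → Euc D) where
  tau : Euc D → ℝ
  X : ℝ → Euc D → Euc D
  tau_mem : ∀ x, tau x ∈ Ioc (0:ℝ) T
  sol : ∀ x, IsSolOn v x (tau x) fun t => X t x
  maximal : ∀ x, ∀ σ : ℝ, σ ≤ T → ∀ Y : ℝ → Euc D, IsSolOn v x σ Y →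
    σ ≤ tau x ∧ ∀ t ∈ Ico (0:ℝ) σ, Y t = X t x

/-! ### Absolutely continuous weights and Grönwall's inequality -/

lemma ac_lipschitz_comp {F φ : ℝ → ℝ} {a b : ℝ} {S : Set ℝ} {C : NNReal}
    (hF : AbsolutelyContinuousOnInterval F a b) (hφ : LipschitzOnWith C φ S)
    (hS : MapsTo F (uIcc a b) S) : AbsolutelyContinuousOnInterval (φ ∘ F) a b := by
  rw [absolutelyContinuousOnInterval_iff] at hF ⊢
  intro ε hε
  obtain ⟨δ, hδ, h⟩ := hF (ε / (C + 1)) (by positivity)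
  refine ⟨δ, hδ, fun E hE hlen => ?_⟩
  calc ∑ i ∈ Finset.range E.1, dist ((φ ∘ F) (E.2 i).1) ((φ ∘ F) (E.2 i).2)
      ≤ ∑ i ∈ Finset.range E.1, (C + 1) * dist (F (E.2 i).1) (F (E.2 i).2) := by
        refine Finset.sum_le_sum fun i hi => ?_
        refine (hφ.dist_le_mul _ (hS (hE.1 i hi).1) _ (hS (hE.1 i hi).2)).trans ?_
        gcongr
        simp
    _ = (C + 1) * ∑ i ∈ Finset.range E.1, dist (F (E.2 i).1) (F (E.2 i).2) :=
        (Finset.mul_sum _ _ _).symm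
    _ < (C + 1) * (ε / (C + 1)) := by
        have := h E hE hlen
        gcongr
    _ = ε := by field_simp

lemma integral_mul_exp {g : ℝ → ℝ} (hg : Integrable g) (c s : ℝ) :
    ∫ r in (0:ℝ)..s, c * (g r * Real.exp (c * ∫ q in (0:ℝ)..r, g q)) =
      Real.exp (c * ∫ q in (0:ℝ)..s, g q) - 1 := by
  have hgi : IntervalIntegrable g volume 0 s := hg.intervalIntegrable
  have hac := hgi.absolutelyContinuousOnInterval_intervalIntegral (c := 0) (by simp)
  obtain ⟨B, hB⟩ := hac.exists_bound
  have hsm : ContDiff ℝ 1 (fun z : ℝ => Real.exp (c * z)) := by fun_prop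
  obtain ⟨C, hC⟩ := LocallyLipschitzOn.exists_lipschitzOnWith_of_compact
    (isCompact_Icc (a := -B) (b := B)) (hsm.locallyLipschitz.locallyLipschitzOn (s := Icc (-B) B))
  have hexp := ac_lipschitz_comp hac hC (fun r hr => abs_le.1 (hB r hr))
  have h := hexp.integral_deriv_eq_sub
  simp only [Function.comp_apply, intervalIntegral.integral_same, mul_zero, Real.exp_zero] at h
  rw [← h]
  refine intervalIntegral.integral_congr_ae ?_
  filter_upwards [hgi.ae_hasDerivAt_integral] with r hr hrs
  have hd := (hr (uIoc_subset_uIcc hrs) 0 (by simp)).const_mul c |>.exp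
  have hd' : HasDerivAt ((fun z : ℝ => Real.exp (c * z)) ∘ fun x => ∫ v in (0:ℝ)..x, g v)
      (Real.exp (c * ∫ q in (0:ℝ)..r, g q) * (c * g r)) r := hd
  rw [hd'.deriv]
  ring

lemma continuous_primitive_zero {g : ℝ → ℝ} (hg : Integrable g) :
    Continuous fun s => ∫ r in (0:ℝ)..s, g r :=
  intervalIntegral.continuous_primitive (fun _ _ => hg.intervalIntegrable) 0

/-- Grönwall's inequality with an integrable kernel, for continuous `u`. -/
lemma gronwall_L1 {g : ℝ → ℝ} (hg : Integrable g) (hg0 : ∀ r, 0 ≤ g r) {a t : ℝ}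
    {u : ℝ → ℝ} (hu : ContinuousOn u (Icc 0 t))
    (h : ∀ s ∈ Icc (0:ℝ) t, u s ≤ a + ∫ r in (0:ℝ)..s, g r * u r) {s : ℝ} (hs : s ∈ Icc (0:ℝ) t) :
    u s ≤ a * Real.exp (∫ r in (0:ℝ)..s, g r) := by
  set F : ℝ → ℝ := fun s => ∫ r in (0:ℝ)..s, g r with hF
  have hFc : Continuous F := continuous_primitive_zero hg
  obtain ⟨m, hm, hmax⟩ := isCompact_Icc.exists_isMaxOn ⟨s, hs⟩
    (hu.mul (Real.continuous_exp.comp hFc.neg).continuousOn)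
  set M := u m * Real.exp (-F m) with hM
  have hbound : ∀ r ∈ Icc (0:ℝ) t, u r ≤ M * Real.exp (F r) := by
    intro r hr
    have h1 : u r * Real.exp (-F r) ≤ M := hmax hr
    calc u r = (u r * Real.exp (-F r)) * Real.exp (F r) := by
          rw [mul_assoc, ← Real.exp_add]; simp
      _ ≤ _ := by gcongr
  have hum : u m = M * Real.exp (F m) := by
    rw [hM, mul_assoc, ← Real.exp_add]; simp
  -- At a maximiser of `u e^{-F}` the hypothesis reads `M e^{F} ≤ a + M (e^{F} - 1)`.
  have hMa : M ≤ a := by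
    have hsub : Icc (0:ℝ) m ⊆ Icc 0 t := Icc_subset_Icc_right hm.2
    have h1 : ∫ r in (0:ℝ)..m, g r * u r ≤ ∫ r in (0:ℝ)..m, g r * (M * Real.exp (F r)) := by
      refine intervalIntegral.integral_mono_on hm.1 ?_ ?_ fun r hr =>
        mul_le_mul_of_nonneg_left (hbound r (hsub hr)) (hg0 r)
      · refine hg.intervalIntegrable.mul_continuousOn ?_
        rw [uIcc_of_le hm.1]
        exact hu.mono hsub
      · refine hg.intervalIntegrable.mul_continuousOn ?_
        fun_prop
    have h2 : ∫ r in (0:ℝ)..m, g r * (M * Real.exp (F r)) = M * (Real.exp (F m) - 1) := by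
      have := integral_mul_exp hg 1 m
      simp only [one_mul] at this
      rw [← this, ← intervalIntegral.integral_const_mul]
      refine intervalIntegral.integral_congr fun r _ => ?_
      simp only [hF]
      ring
    have h3 := h m hm
    nlinarith
  exact (hbound s hs).trans (by gcongr)

/-! ### Global solutions for globally Lipschitz fields with integrable constants -/

/-- A Carathéodory field on `ℝ^D` which at time `t` is bounded by `g t` and `g t`-Lipschitz, with
`g` integrable over all of `ℝ`. -/
structure GlobField {D : ℕ} (w : ℝ → Euc D → Euc D) (g : ℝ → ℝ) : Prop where
  meas : ∀ x, Measurable fun t => w t x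
  bound : ∀ t x, ‖w t x‖ ≤ g t
  lip : ∀ t x x', ‖w t x - w t x'‖ ≤ g t * ‖x - x'‖
  integ : Integrable g

namespace GlobField

variable {D : ℕ} {w : ℝ → Euc D → Euc D} {g : ℝ → ℝ}

lemma nonneg (hw : GlobField w g) (t : ℝ) : 0 ≤ g t := (norm_nonneg _).trans (hw.bound t 0)

lemma stronglyMeasurable (hw : GlobField w g) :
    StronglyMeasurable (fun p : Euc D × ℝ => w p.2 p.1) := by
  refine stronglyMeasurable_uncurry_of_continuous_of_stronglyMeasurable (u := fun x t => w t x)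
    (fun t => ?_) (fun x => (hw.meas x).stronglyMeasurable)
  refine (LipschitzWith.of_dist_le_mul (K := (g t).toNNReal) fun x x' => ?_).continuous
  rw [dist_eq_norm, dist_eq_norm, Real.coe_toNNReal _ (hw.nonneg t)]
  exact hw.lip t x x'

lemma intervalIntegrable (hw : GlobField w g) {Z : ℝ → Euc D} {s : ℝ} (hs : 0 ≤ s)
    (hZ : ContinuousOn Z (Icc 0 s)) :
    IntervalIntegrable (fun r => w r (Z r)) volume 0 s := by
  rw [intervalIntegrable_iff_integrableOn_Icc_of_le hs]
  refine Integrable.mono' hw.integ.integrableOn ?_ (Eventually.of_forall fun r => hw.bound r _)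
  have hp : AEMeasurable (fun r => (Z r, r)) (volume.restrict (Icc 0 s)) :=
    (hZ.aemeasurable measurableSet_Icc).prodMk aemeasurable_id
  exact (hw.stronglyMeasurable.aestronglyMeasurable).comp_aemeasurable hp

lemma continuous_primitive (hw : GlobField w g) {Z : ℝ → Euc D} (hZ : Continuous Z) :
    Continuous fun s => ∫ r in (0:ℝ)..s, w r (Z r) := by
  refine intervalIntegral.continuous_primitive (fun a b => ?_) 0
  refine Integrable.intervalIntegrable (Integrable.mono' hw.integ ?_
    (Eventually.of_forall fun r => hw.bound r _))
  exact (hw.stronglyMeasurable.comp_measurable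
    (hZ.measurable.prodMk measurable_id)).aestronglyMeasurable

lemma norm_integral_sub_le (hw : GlobField w g) {Z Z' : ℝ → Euc D} {s : ℝ} (hs : 0 ≤ s)
    (hZ : ContinuousOn Z (Icc 0 s)) (hZ' : ContinuousOn Z' (Icc 0 s)) :
    ‖(∫ r in (0:ℝ)..s, w r (Z r)) - ∫ r in (0:ℝ)..s, w r (Z' r)‖ ≤
      ∫ r in (0:ℝ)..s, g r * ‖Z r - Z' r‖ := by
  rw [← intervalIntegral.integral_sub (hw.intervalIntegrable hs hZ)
    (hw.intervalIntegrable hs hZ')]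
  refine intervalIntegral.norm_integral_le_of_norm_le hs
    (Eventually.of_forall fun r _ => hw.lip r _ _) ?_
  refine hw.integ.intervalIntegrable.mul_continuousOn ?_
  rw [uIcc_of_le hs]
  exact (hZ.sub hZ').norm

/-- The Picard map in the unknown `U = e^{-2F} Z`, `F(s) = ∫_0^s g`, for which the sup norm of `U`
is the weighted norm of `Z`. -/
def picard (hw : GlobField w g) {T : ℝ} (hT : 0 ≤ T) (y : Euc D) (U : C(Icc (0:ℝ) T, Euc D)) :
    C(Icc (0:ℝ) T, Euc D) where
  toFun s := Real.exp (-(2 * ∫ q in (0:ℝ)..s, g q)) •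
    (y + ∫ r in (0:ℝ)..s, w r (Real.exp (2 * ∫ q in (0:ℝ)..r, g q) • IccExtend hT U r))
  continuous_toFun := by
    have hF := continuous_primitive_zero hw.integ
    have hE : Continuous (IccExtend hT U) := U.continuous.Icc_extend'
    have hI := hw.continuous_primitive
      (Z := fun r => Real.exp (2 * ∫ q in (0:ℝ)..r, g q) • IccExtend hT U r) (by fun_prop)
    have : Continuous fun s : ℝ => Real.exp (-(2 * ∫ q in (0:ℝ)..s, g q)) •
      (y + ∫ r in (0:ℝ)..s, w r (Real.exp (2 * ∫ q in (0:ℝ)..r, g q) • IccExtend hT U r)) := by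
      fun_prop
    exact this.comp continuous_subtype_val

lemma picard_contracting (hw : GlobField w g) {T : ℝ} (hT : 0 ≤ T) (y : Euc D) :
    ContractingWith (1 / 2) (hw.picard hT y) := by
  refine ⟨by rw [← NNReal.coe_lt_coe]; norm_num, LipschitzWith.of_dist_le_mul fun U V => ?_⟩
  rw [ContinuousMap.dist_le (by positivity)]
  rintro ⟨s, hs⟩
  have hF := continuous_primitive_zero hw.integ
  have hcont : ∀ U : C(Icc (0:ℝ) T, Euc D), Continuous
      fun r => Real.exp (2 * ∫ q in (0:ℝ)..r, g q) • IccExtend hT U r := by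
    intro U
    have hE : Continuous (IccExtend hT U) := U.continuous.Icc_extend'
    fun_prop
  have h1 := hw.norm_integral_sub_le hs.1 (hcont U).continuousOn (hcont V).continuousOn
  have h2 : ∫ r in (0:ℝ)..s, g r * ‖Real.exp (2 * ∫ q in (0:ℝ)..r, g q) • IccExtend hT U r -
      Real.exp (2 * ∫ q in (0:ℝ)..r, g q) • IccExtend hT V r‖ ≤
      ∫ r in (0:ℝ)..s, (dist U V / 2) * (2 * (g r * Real.exp (2 * ∫ q in (0:ℝ)..r, g q))) := by
    refine intervalIntegral.integral_mono_on hs.1 ?_ ?_ fun r _ => ?_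
    · exact hw.integ.intervalIntegrable.mul_continuousOn
        ((hcont U).sub (hcont V)).norm.continuousOn
    · exact ((hw.integ.intervalIntegrable.mul_continuousOn
        (by fun_prop)).const_mul 2).const_mul _
    · rw [← smul_sub, norm_smul, Real.norm_of_nonneg (Real.exp_pos _).le]
      have h3 : ‖IccExtend hT U r - IccExtend hT V r‖ ≤ dist U V := by
        rw [← dist_eq_norm]
        exact ContinuousMap.dist_apply_le_dist _
      have := mul_le_mul_of_nonneg_left h3
        (mul_nonneg (hw.nonneg r) (Real.exp_pos (2 * ∫ q in (0:ℝ)..r, g q)).le)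
      linarith
  rw [intervalIntegral.integral_const_mul, integral_mul_exp hw.integ 2 s] at h2
  change dist (Real.exp (-(2 * ∫ q in (0:ℝ)..s, g q)) • (y + _))
    (Real.exp (-(2 * ∫ q in (0:ℝ)..s, g q)) • (y + _)) ≤ _
  rw [dist_eq_norm, ← smul_sub, norm_smul, Real.norm_of_nonneg (Real.exp_pos _).le,
    add_sub_add_left_eq_sub]
  calc _ ≤ Real.exp (-(2 * ∫ q in (0:ℝ)..s, g q)) *
        (dist U V / 2 * (Real.exp (2 * ∫ q in (0:ℝ)..s, g q) - 1)) := by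
        gcongr
        exact h1.trans h2
    _ = dist U V / 2 * (1 - Real.exp (-(2 * ∫ q in (0:ℝ)..s, g q))) := by
        have : Real.exp (-(2 * ∫ q in (0:ℝ)..s, g q)) *
          Real.exp (2 * ∫ q in (0:ℝ)..s, g q) = 1 := by rw [← Real.exp_add]; simp
        linear_combination (dist U V / 2) * this
    _ ≤ dist U V / 2 * 1 := by
        gcongr
        linarith [Real.exp_pos (-(2 * ∫ q in (0:ℝ)..s, g q))]
    _ = _ := by
        push_cast
        ring

lemma exists_global_solution (hw : GlobField w g) {T : ℝ} (hT : 0 ≤ T) (y : Euc D) :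
    ∃ Z : ℝ → Euc D, Continuous Z ∧
      ∀ s ∈ Icc (0:ℝ) T, Z s = y + ∫ r in (0:ℝ)..s, w r (Z r) := by
  have : Nonempty (C(Icc (0:ℝ) T, Euc D)) := ⟨0⟩
  have hfix := (hw.picard_contracting hT y).fixedPoint_isFixedPt
  set U := (hw.picard_contracting hT y).fixedPoint with hU
  have hF := continuous_primitive_zero hw.integ
  have hE : Continuous (IccExtend hT U) := U.continuous.Icc_extend'
  refine ⟨fun r => Real.exp (2 * ∫ q in (0:ℝ)..r, g q) • IccExtend hT U r, by fun_prop,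
    fun s hs => ?_⟩
  have h1 : U ⟨s, hs⟩ = Real.exp (-(2 * ∫ q in (0:ℝ)..s, g q)) •
    (y + ∫ r in (0:ℝ)..s, w r (Real.exp (2 * ∫ q in (0:ℝ)..r, g q) • IccExtend hT U r)) :=
    (DFunLike.congr_fun hfix ⟨s, hs⟩).symm
  change Real.exp (2 * ∫ q in (0:ℝ)..s, g q) • IccExtend hT U s = _
  rw [IccExtend_of_mem hT U hs, h1, smul_smul, ← Real.exp_add]
  simp

end GlobField

/-! ### Truncation of an admissible field -/

/-- The metric projection onto a closed ball: a `1`-Lipschitz map that fixes the ball. -/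
lemma exists_proj {D : ℕ} {R : ℝ} (hR : 0 ≤ R) :
    ∃ P : Euc D → Euc D, (∀ x, P x ∈ Metric.closedBall (0 : Euc D) R) ∧
      (∀ x ∈ Metric.closedBall (0 : Euc D) R, P x = x) ∧ ∀ x x', ‖P x - P x'‖ ≤ ‖x - x'‖ := by
  have hconv : Convex ℝ (Metric.closedBall (0 : Euc D) R) := convex_closedBall _ _
  choose P hPmem hP using exists_norm_eq_iInf_of_complete_convex
    (K := Metric.closedBall (0 : Euc D) R) ⟨0, by simpa using hR⟩
    Metric.isClosed_closedBall.isComplete hconv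
  have hvar := fun x => (norm_eq_iInf_iff_real_inner_le_zero hconv (hPmem x)).1 (hP x)
  refine ⟨P, hPmem, fun x hx => ?_, fun x x' => ?_⟩
  · have h := hvar x x hx
    rw [real_inner_self_nonpos, sub_eq_zero] at h
    exact h.symm
  · have h1 := hvar x (P x') (hPmem x')
    have h2 := hvar x' (P x) (hPmem x)
    have h3 : ‖P x - P x'‖ * ‖P x - P x'‖ ≤ inner ℝ (x - x') (P x - P x') := by
      rw [← real_inner_self_eq_norm_mul_norm]
      have e : inner ℝ (x - x') (P x - P x') - inner ℝ (P x - P x') (P x - P x') =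
          -inner ℝ (x - P x) (P x' - P x) - inner ℝ (x' - P x') (P x - P x') := by
        rw [← neg_sub (P x) (P x'), inner_neg_right, neg_neg, ← inner_sub_left, ← inner_sub_left]
        congr 1
        abel
      linarith
    have h4 := h3.trans (real_inner_le_norm _ _)
    rcases (norm_nonneg (P x - P x')).eq_or_lt with h | h
    · rw [← h]; positivity
    · exact le_of_mul_le_mul_right h4 h

lemma lipOn_nonneg {D : ℕ} (f : Euc D → Euc D) (K : Set (Euc D)) : 0 ≤ lipOn f K :=
  Real.sInf_nonneg fun _ h => h.1

/-- The infimum defining `lipOn` is attained for a locally Lipschitz map on a compact set. -/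
lemma norm_sub_le_lipOn {D : ℕ} {f : Euc D → Euc D} {K : Set (Euc D)} (hK : IsCompact K)
    (hf : LocallyLipschitz f) {x y : Euc D} (hx : x ∈ K) (hy : y ∈ K) :
    ‖f x - f y‖ ≤ lipOn f K * ‖x - y‖ := by
  rcases eq_or_ne x y with rfl | hxy
  · simp
  have hpos : 0 < ‖x - y‖ := norm_pos_iff.2 (sub_ne_zero.2 hxy)
  rw [← div_le_iff₀ hpos]
  obtain ⟨C, hC⟩ := LocallyLipschitzOn.exists_lipschitzOnWith_of_compact hK
    (hf.locallyLipschitzOn (s := K))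
  refine le_csInf ⟨C, C.2, by simpa using hC⟩ ?_
  rintro c ⟨hc0, hc⟩
  rw [div_le_iff₀ hpos, ← dist_eq_norm, ← dist_eq_norm]
  simpa [Real.coe_toNNReal _ hc0] using hc.dist_le_mul x hx y hy

lemma norm_le_sSup {D : ℕ} {f : Euc D → Euc D} {K : Set (Euc D)} (hK : IsCompact K)
    (hf : LocallyLipschitz f) {x : Euc D} (hx : x ∈ K) :
    ‖f x‖ ≤ sSup ((fun x => ‖f x‖) '' K) :=
  le_csSup (hK.image hf.continuous.norm).bddAbove ⟨x, hx, rfl⟩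

/-- Truncation: an admissible field agrees on a closed ball and on `(0,T]` with a field on `ℝ^D`
whose bound and global Lipschitz constant are `f_K`, extended by zero in time. -/
lemma exists_globField {D : ℕ} {T : ℝ} {v : ℝ → Euc D → Euc D} (hv : IsAdmissible T v)
    {R : ℝ} (hR : 0 ≤ R) :
    ∃ w : ℝ → Euc D → Euc D,
      GlobField w ((Ioc 0 T).indicator (fks v (Metric.closedBall (0 : Euc D) R))) ∧
      ∀ r ∈ Ioc 0 T, ∀ x ∈ Metric.closedBall (0 : Euc D) R, w r x = v r x := by
  obtain ⟨P, hPmem, hPfix, hPlip⟩ := exists_proj (D := D) hR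
  have hK : IsCompact (Metric.closedBall (0 : Euc D) R) := isCompact_closedBall _ _
  refine ⟨fun r x => (Ioc 0 T).indicator (fun r => v r (P x)) r, ⟨fun x => ?_, fun r x => ?_,
    fun r x x' => ?_, ?_⟩, fun r hr x hx => ?_⟩
  · exact (hv.meas _).indicator measurableSet_Ioc
  · by_cases hr : r ∈ Ioc 0 T
    · simp only [indicator_of_mem hr, fks]
      have h1 := norm_le_sSup hK (hv.locLip r (Ioc_subset_Icc_self hr)) (hPmem x)
      have h2 := lipOn_nonneg (v r) (Metric.closedBall (0 : Euc D) R)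
      linarith
    · simp [indicator_of_notMem hr]
  · by_cases hr : r ∈ Ioc 0 T
    · simp only [indicator_of_mem hr, fks]
      have hl := hv.locLip r (Ioc_subset_Icc_self hr)
      have h0 := (norm_nonneg _).trans (norm_le_sSup hK hl (hPmem x))
      have h1 := norm_sub_le_lipOn hK hl (hPmem x) (hPmem x')
      have h2 := lipOn_nonneg (v r) (Metric.closedBall (0 : Euc D) R)
      refine h1.trans ?_
      exact mul_le_mul (by linarith) (hPlip x x') (norm_nonneg _) (by linarith)
    · simp [indicator_of_notMem hr]
  · rw [integrable_indicator_iff measurableSet_Ioc]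
    exact hv.integ _ hK
  · simp only [indicator_of_mem hr, hPfix x hx]

/-! ### Stability of trajectories -/

lemma stability {D : ℕ} {T : ℝ} {v : ℝ → Euc D → Euc D} (hv : IsAdmissible T v)
    (F : MaxFlow T v) {t : ℝ} (ht : t ∈ Ioo (0:ℝ) T) {b L : ℝ} (hb : 0 < b) (hL : 0 < L)
    {x y : Euc D} (htx : t < F.tau x)
    (hx : ∀ s ∈ Icc (0:ℝ) t, F.X s x ∈ Metric.ball (0 : Euc D) b)
    (hy : ‖y - x‖ <
      L * Real.exp (-(∫ s in (0:ℝ)..t, fks v (Metric.closedBall (0 : Euc D) (b + L)) s))) :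
    t < F.tau y ∧ ∀ s ∈ Icc (0:ℝ) t,
      ‖F.X s y - F.X s x‖ < L ∧ F.X s y ∈ Metric.ball (0 : Euc D) (b + L) := by
  obtain ⟨ht0, htT⟩ := ht
  obtain ⟨w, hw, hwv⟩ := exists_globField hv (R := b + L) (by positivity)
  set g := (Ioc 0 T).indicator (fks v (Metric.closedBall (0 : Euc D) (b + L))) with hg
  obtain ⟨Z, hZc, hZ⟩ := hw.exists_global_solution (ht0.trans htT).le y
  have hgt : ∫ s in (0:ℝ)..t, g s =
      ∫ s in (0:ℝ)..t, fks v (Metric.closedBall (0 : Euc D) (b + L)) s := by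
    refine intervalIntegral.integral_congr_ae (Eventually.of_forall fun r hr => ?_)
    rw [uIoc_of_le ht0.le] at hr
    exact indicator_of_mem (show r ∈ Ioc 0 T from ⟨hr.1, hr.2.trans htT.le⟩) _
  rw [← hgt, Real.exp_neg, ← div_eq_mul_inv, lt_div_iff₀ (Real.exp_pos _)] at hy
  -- `X(·,x)` solves the truncated equation on `[0,t]`.
  have hXc : ContinuousOn (fun s => F.X s x) (Icc 0 t) :=
    (F.sol x).1.mono fun s hs => ⟨hs.1, hs.2.trans_lt htx⟩
  have hXw : ∀ s ∈ Icc (0:ℝ) t, F.X s x = x + ∫ r in (0:ℝ)..s, w r (F.X r x) := by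
    intro s hs
    have h1 : F.X s x = x + ∫ r in (0:ℝ)..s, v r (F.X r x) :=
      (F.sol x).2 s ⟨hs.1, hs.2.trans_lt htx⟩
    rw [h1]
    congr 1
    refine intervalIntegral.integral_congr_ae (Eventually.of_forall fun r hr => ?_)
    rw [uIoc_of_le hs.1] at hr
    refine (hwv r ⟨hr.1, by linarith [hr.2, hs.2]⟩ _ ?_).symm
    have := hx r ⟨hr.1.le, hr.2.trans hs.2⟩
    exact Metric.ball_subset_closedBall (Metric.ball_subset_ball (by linarith) this)
  have hZX : ∀ s ∈ Icc (0:ℝ) t, ‖Z s - F.X s x‖ < L := by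
    intro s hs
    have hgr := gronwall_L1 hw.integ hw.nonneg (a := ‖y - x‖)
      (u := fun s => ‖Z s - F.X s x‖) (hZc.continuousOn.sub hXc).norm (fun s hs => by
        have h1 := hw.norm_integral_sub_le hs.1 hZc.continuousOn
          (hXc.mono (Icc_subset_Icc_right hs.2))
        have h2 : Z s - F.X s x = (y - x) +
            ((∫ r in (0:ℝ)..s, w r (Z r)) - ∫ r in (0:ℝ)..s, w r (F.X r x)) := by
          nth_rewrite 1 [hZ s ⟨hs.1, hs.2.trans htT.le⟩, hXw s hs]
          abel
        rw [h2]
        exact (norm_add_le _ _).trans (by gcongr)) hs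
    refine hgr.trans_lt (lt_of_le_of_lt ?_ hy)
    gcongr
    exact intervalIntegral.integral_mono_interval le_rfl hs.1 hs.2
      (Eventually.of_forall hw.nonneg) hw.integ.intervalIntegrable
  have hZball : ∀ s ∈ Icc (0:ℝ) t, Z s ∈ Metric.ball (0 : Euc D) (b + L) := by
    intro s hs
    have h1 := hx s hs
    rw [mem_ball_zero_iff] at h1 ⊢
    have h2 := norm_add_le (F.X s x) (Z s - F.X s x)
    rw [add_sub_cancel] at h2
    linarith [hZX s hs]
  obtain ⟨σ, htσ, hσT, hσ⟩ : ∃ σ, t < σ ∧ σ ≤ T ∧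
      ∀ s ∈ Ico (0:ℝ) σ, Z s ∈ Metric.ball (0 : Euc D) (b + L) := by
    have hnhds : ∀ᶠ s in 𝓝 t, Z s ∈ Metric.ball (0 : Euc D) (b + L) :=
      hZc.continuousAt.eventually_mem
        (Metric.isOpen_ball.mem_nhds (hZball t ⟨ht0.le, le_rfl⟩))
    obtain ⟨ε, hε, h⟩ := Metric.eventually_nhds_iff.1 hnhds
    refine ⟨min T (t + ε), lt_min htT (by linarith), min_le_left _ _, fun s hs => ?_⟩
    rcases le_or_gt s t with hst | hst
    · exact hZball s ⟨hs.1, hst⟩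
    · refine h ?_
      rw [Real.dist_eq, abs_of_pos (sub_pos.2 hst)]
      linarith [hs.2.trans_le (min_le_right _ _)]
  have hsol : IsSolOn v y σ Z := by
    refine ⟨hZc.continuousOn, fun s hs => ?_⟩
    rw [hZ s ⟨hs.1, hs.2.le.trans hσT⟩]
    congr 1
    refine intervalIntegral.integral_congr_ae (Eventually.of_forall fun r hr => ?_)
    rw [uIoc_of_le hs.1] at hr
    exact hwv r ⟨hr.1, by linarith [hr.2, hs.2]⟩ _
      (Metric.ball_subset_closedBall (hσ r ⟨hr.1.le, hr.2.trans_lt hs.2⟩))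
  obtain ⟨hτ, hZY⟩ := F.maximal y σ hσT Z hsol
  refine ⟨htσ.trans_le hτ, fun s hs => ?_⟩
  rw [← hZY s ⟨hs.1, hs.2.trans_lt htσ⟩]
  exact ⟨hZX s hs, hZball s hs⟩

/-- stability of trajectories staying in a ball, and openness of the
sets `𝔹_t(b)`. -/
theorem stmt1 {D : ℕ} (hD : 0 < D) {T : ℝ} (hT : 0 < T)
    {v : ℝ → Euc D → Euc D} (hv : IsAdmissible T v) (F : MaxFlow T v)
    {t : ℝ} (ht : t ∈ Ioo (0:ℝ) T) :
    (∀ b L : ℝ, 0 < b → 0 < L → ∀ x y : Euc D,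
      (t < F.tau x ∧ ∀ s ∈ Icc (0:ℝ) t, F.X s x ∈ Metric.ball (0 : Euc D) b) →
      ‖y - x‖ <
        L * Real.exp (-(∫ s in (0:ℝ)..t, fks v (Metric.closedBall (0 : Euc D) (b + L)) s)) →
      t < F.tau y ∧ ∀ s ∈ Icc (0:ℝ) t,
        ‖F.X s y - F.X s x‖ < L ∧ F.X s y ∈ Metric.ball (0 : Euc D) (b + L)) ∧
    (∀ b : ℝ, 0 < b →
      IsOpen {x : Euc D | t < F.tau x ∧
        ∀ s ∈ Icc (0:ℝ) t, F.X s x ∈ Metric.ball (0 : Euc D) b}) := by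
  refine ⟨fun b L hb hL x y hx hy => stability hv F ht hb hL hx.1 hx.2 hy, fun b hb => ?_⟩
  rw [Metric.isOpen_iff]
  rintro x ⟨htx, hx⟩
  have hXc : ContinuousOn (fun s => F.X s x) (Icc 0 t) :=
    (F.sol x).1.mono fun s hs => ⟨hs.1, hs.2.trans_lt htx⟩
  obtain ⟨m, hm, hmax⟩ := isCompact_Icc.exists_isMaxOn ⟨0, le_rfl, ht.1.le⟩ hXc.norm
  have hmb : ‖F.X m x‖ < b := by simpa using hx m hm
  -- A radius strictly between the maximum of `|X_s(x)|` and `b`.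
  obtain ⟨b', hb', hb'b⟩ := exists_between hmb
  have hb'0 : 0 < b' := (norm_nonneg _).trans_lt hb'
  refine ⟨(b - b') * Real.exp
    (-(∫ s in (0:ℝ)..t, fks v (Metric.closedBall (0 : Euc D) (b' + (b - b'))) s)),
    mul_pos (sub_pos.2 hb'b) (Real.exp_pos _), fun y hy => ?_⟩
  rw [Metric.mem_ball, dist_eq_norm] at hy
  obtain ⟨h1, h2⟩ := stability hv F ht hb'0 (sub_pos.2 hb'b) htx
    (fun s hs => mem_ball_zero_iff.2 ((hmax hs : ‖F.X s x‖ ≤ _).trans_lt hb')) hy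
  refine ⟨h1, fun s hs => ?_⟩
  have := (h2 s hs).2
  rwa [add_sub_cancel] at this
end
end

section
/- Let v be an admissible velocity field on [0,T] × ℝ^D, let ε > 0, let α_0 > 0, and let μ_0 be a finite Borel measure on ℝ^D with ∫ e^{α_0|x|} dμ_0(x) < ∞. Define for t ∈ [0,T) the measure μ_t by ∫ ψ dμ_t = ∫_{S_t} exp(−ε ∫_0^t |v_s(X_s(x))| ds) · ψ(X_t(x)) dμ_0(x). Then for every α with 0 < α ≤ min{α_0, ε}, the α-exponential moment t ↦ M_α(μ_t) = ∫ e^{α|y|} dμ_t(y) is finite and nonincreasing on [0,T); in particular the total mass t ↦ μ_t(ℝ^D) is nonincreasing. -/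
/-!
Along a trajectory, `|X_t|` grows between two times by at most the length of the path travelled,
`∫ |v_s(X_s)| ds`, while the damping exponent `-ε ∫₀ᵗ |v_s(X_s)| ds` drops by `ε` times that
length. For `0 ≤ α ≤ ε` the product `exp (-ε ∫₀ᵗ |v|) * exp (α |X_t|)` is therefore nonincreasing in
`t` (`weight_antitone`), and so is the set `S_t = {t < τ}`. Integrating against `μ₀` gives the
monotonicity of `M_α(μ_t)` (`moment_antitone`); the value at `t = 0` is at most `M_{α₀}(μ₀)`, which
gives finiteness, and `α = 0` is the statement on the total mass.

The integration step compares integrands on `S_t` only, so it needs `S_t` to be measurable. In fact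
`S_t` is open (`isOpen_lt_tau`). The velocity is only integrable in time, so this rests on a
Carathéodory version of the Picard-Lindelöf theorem with continuous dependence on the initial point
(`exists_solution_near`), obtained from the Banach fixed point theorem in a weighted sup norm.
-/

open MeasureTheory Set Filter Topology

noncomputable section

open scoped ENNReal

/-! ### Bounds on the velocity field -/

/-- The number `fks v K t` is a genuine bound and Lipschitz constant for `v t` on `K`: on a compact
set the supremum is that of a bounded set and the infimum defining `lipOn` is over a nonempty set,
where it is attained. -/
lemma fks_bounds {D : ℕ} {T : ℝ} {v : ℝ → Euc D → Euc D} (hv : IsAdmissible T v)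
    {K : Set (Euc D)} (hK : IsCompact K) {t : ℝ} (ht : t ∈ Icc 0 T) :
    0 ≤ fks v K t ∧ (∀ x ∈ K, ‖v t x‖ ≤ fks v K t) ∧
      ∀ x ∈ K, ∀ y ∈ K, ‖v t x - v t y‖ ≤ fks v K t * ‖x - y‖ := by
  have hll := hv.locLip t ht
  have hbdd : BddAbove ((fun x => ‖v t x‖) '' K) :=
    (hK.image_of_continuousOn (hll.continuous.norm.continuousOn)).bddAbove
  have hsup : 0 ≤ sSup ((fun x => ‖v t x‖) '' K) :=
    Real.sSup_nonneg (by rintro _ ⟨x, -, rfl⟩; exact norm_nonneg _)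
  have hlip0 : 0 ≤ lipOn (v t) K := Real.sInf_nonneg (fun C hC => hC.1)
  refine ⟨add_nonneg hsup hlip0, fun x hx => ?_, fun x hx y hy => ?_⟩
  · have := le_csSup hbdd (mem_image_of_mem (fun x => ‖v t x‖) hx)
    unfold fks
    linarith
  · obtain ⟨C₀, hC₀⟩ := (show LocallyLipschitzOn K (v t) from hll.locallyLipschitzOn).exists_lipschitzOnWith_of_compact hK
    have hne : {C : ℝ | 0 ≤ C ∧ LipschitzOnWith C.toNNReal (v t) K}.Nonempty :=
      ⟨C₀, C₀.2, by simpa using hC₀⟩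
    have key : ‖v t x - v t y‖ ≤ lipOn (v t) K * ‖x - y‖ := by
      rcases (norm_nonneg (x - y)).eq_or_lt with h | h
      · have : x = y := by
          rw [← sub_eq_zero, ← norm_eq_zero]; exact h.symm
        subst this; simp
      · rw [← div_le_iff₀ h]
        refine le_csInf hne fun C hC => ?_
        rw [div_le_iff₀ h]
        have := hC.2.dist_le_mul x hx y hy
        rwa [dist_eq_norm, dist_eq_norm, Real.coe_toNNReal _ hC.1] at this
    refine key.trans ?_
    unfold fks
    gcongr
    linarith

lemma intervalIntegrable_fks {D : ℕ} {T : ℝ} {v : ℝ → Euc D → Euc D} (hv : IsAdmissible T v)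
    {K : Set (Euc D)} (hK : IsCompact K) {b : ℝ} (hb : b ∈ Icc 0 T) :
    IntervalIntegrable (fks v K) volume 0 b := by
  rw [intervalIntegrable_iff_integrableOn_Ioc_of_le hb.1]
  exact (hv.integ K hK).mono_set (Ioc_subset_Ioc_right hb.2)

/-- Along a continuous curve in a compact set the velocity is integrable: it is measurable by the
Carathéodory argument and dominated by `fks v K`. -/
lemma intervalIntegrable_comp {D : ℕ} {T : ℝ} {v : ℝ → Euc D → Euc D} (hv : IsAdmissible T v)
    {K : Set (Euc D)} (hK : IsCompact K) {b : ℝ} (hb : b ∈ Icc 0 T) {Y : ℝ → Euc D}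
    (hY : ContinuousOn Y (Icc 0 b)) (hYK : ∀ s ∈ Icc 0 b, Y s ∈ K) :
    IntervalIntegrable (fun s => v s (Y s)) volume 0 b := by
  -- outside `[0, T]` the field need not be continuous in space, so it is cut off there
  have hm : Measurable (Function.uncurry
      (fun (x : Euc D) (s : ℝ) => (Icc (0:ℝ) T).indicator (fun s => v s x) s)) := by
    refine measurable_uncurry_of_continuous_of_measurable (fun s => ?_) (fun x => ?_)
    · by_cases hs : s ∈ Icc (0:ℝ) T
      · simpa [indicator_of_mem hs] using (hv.locLip s hs).continuous
      · simpa [indicator_of_notMem hs] using continuous_const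
    · exact (hv.meas x).indicator measurableSet_Icc
  have hYm : AEMeasurable Y (volume.restrict (Ioc 0 b)) :=
    (hY.mono Ioc_subset_Icc_self).aemeasurable measurableSet_Ioc
  have hcomp := hm.comp_aemeasurable (hYm.prodMk aemeasurable_id)
  refine (intervalIntegrable_fks hv hK hb).mono_fun' ?_ ?_
  · rw [uIoc_of_le hb.1]
    refine (hcomp.congr ?_).aestronglyMeasurable
    filter_upwards [ae_restrict_mem measurableSet_Ioc] with s hs
    have : s ∈ Icc (0:ℝ) T := ⟨hs.1.le, hs.2.trans hb.2⟩
    simp [Function.uncurry, indicator_of_mem this]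
  · rw [uIoc_of_le hb.1]
    filter_upwards [ae_restrict_mem measurableSet_Ioc] with s hs
    exact (fks_bounds hv hK ⟨hs.1.le, hs.2.trans hb.2⟩).2.1 _ (hYK s ⟨hs.1.le, hs.2⟩)

/-! ### Carathéodory existence and continuous dependence -/

lemma intervalIntegrable_sub {E : Type*} [NormedAddCommGroup E] {g : ℝ → E} {b t : ℝ}
    (hg : IntervalIntegrable g volume 0 b) (hb : 0 ≤ b) (ht : t ∈ Icc 0 b) :
    IntervalIntegrable g volume 0 t :=
  hg.mono_set (by rw [uIcc_of_le hb, uIcc_of_le ht.1]; exact Icc_subset_Icc_right ht.2)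

/-- A continuous Bielecki-type weight for an integrable rate `l`: integration against `l` loses a
factor two when measured relative to the weight. It is `(1 + ∫₀ᵗ l) ^ n` with `n` large; a power is
used rather than an exponential because products of absolutely continuous functions are absolutely
continuous, so that the fundamental theorem of calculus applies to it although `l` is merely
integrable. -/
lemma exists_weight {b : ℝ} (hb : 0 ≤ b) {l : ℝ → ℝ} (hl : IntervalIntegrable l volume 0 b)
    (hl0 : ∀ s ∈ Icc 0 b, 0 ≤ l s) :
    ∃ m : ℝ → ℝ, Continuous m ∧ (∀ s, 1 ≤ m s) ∧
      ∀ t ∈ Icc 0 b, ∫ s in (0:ℝ)..t, l s * m s ≤ m t / 2 := by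
  set L : ℝ → ℝ := fun t => 1 + ∫ s in (0:ℝ)..t, l s with hL
  have hL1 : ∀ t ∈ Icc 0 b, 1 ≤ L t := fun t ht => by
    have := intervalIntegral.integral_nonneg (μ := volume) ht.1
      (fun s hs => hl0 s ⟨hs.1, hs.2.trans ht.2⟩)
    simp only [hL]; linarith
  have hLc : ContinuousOn L (Icc 0 b) := by
    have := intervalIntegral.continuousOn_primitive_interval' hl left_mem_uIcc
    rw [uIcc_of_le hb] at this
    exact continuousOn_const.add this
  have hLac : ∀ t ∈ Icc 0 b, AbsolutelyContinuousOnInterval L 0 t := fun t ht =>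
    AbsolutelyContinuousOnInterval.add
      (f := fun _ => (1:ℝ))
      ((LipschitzWith.const (1:ℝ)).lipschitzOnWith.absolutelyContinuousOnInterval)
      ((intervalIntegrable_sub hl hb ht).absolutelyContinuousOnInterval_intervalIntegral left_mem_uIcc)
  obtain ⟨M, hM⟩ := (isCompact_Icc.image_of_continuousOn hLc).bddAbove
  have hM' : ∀ t ∈ Icc 0 b, L t ≤ M := fun t ht => hM (mem_image_of_mem _ ht)
  -- `n ≥ 2 L` on `[0, b]` makes `∫ l L ^ n ≤ L ^ (n + 1) / (n + 1)` at most `L ^ n / 2`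
  obtain ⟨n, hn⟩ := exists_nat_ge (2 * M)
  have hpow : ∀ k : ℕ, ∀ t ∈ Icc 0 b,
      AbsolutelyContinuousOnInterval (fun s => L s ^ k) 0 t := by
    intro k t ht
    induction k with
    | zero =>
      simpa using
        ((LipschitzWith.const (1:ℝ)).lipschitzOnWith.absolutelyContinuousOnInterval)
    | succ k ih => simpa [pow_succ] using ih.fun_mul (hLac t ht)
  have hid : ∀ t ∈ Icc 0 b, ∫ s in (0:ℝ)..t, l s * L s ^ n ≤ L t ^ n / 2 := by
    intro t ht
    have h1 := (hpow (n+1) t ht).integral_deriv_eq_sub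
    have h2 : ∫ s in (0:ℝ)..t, deriv (fun s => L s ^ (n+1)) s
        = ∫ s in (0:ℝ)..t, (n+1 : ℝ) * (l s * L s ^ n) := by
      refine intervalIntegral.integral_congr_ae ?_
      filter_upwards [(intervalIntegrable_sub hl hb ht).ae_hasDerivAt_integral] with s hs hst
      have := (((hs (uIoc_subset_uIcc hst) 0 left_mem_uIcc).const_add 1).pow (n+1)).deriv
      refine Eq.trans this ?_
      push_cast
      simp only [hL]
      ring
    rw [h2, intervalIntegral.integral_const_mul] at h1
    have hLt := hL1 t ht
    have hLp : 0 ≤ L t ^ n := by positivity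
    have h3 : (n+1 : ℝ) * ∫ s in (0:ℝ)..t, l s * L s ^ n ≤ (n+1 : ℝ) * (L t ^ n / 2) := by
      rw [h1]
      have h0 : 0 ≤ L 0 ^ (n+1) := by
        have := hL1 0 ⟨le_rfl, hb⟩
        positivity
      have : L t ^ (n+1) ≤ L t ^ n * (n / 2) := by
        rw [pow_succ]
        gcongr
        linarith [hM' t ht]
      nlinarith
    exact le_of_mul_le_mul_left h3 (by positivity)
  -- constant extension outside `[0, b]` makes the weight globally continuous
  refine ⟨IccExtend hb ((Icc 0 b).domRestrict fun s => L s ^ n), ?_, ?_, ?_⟩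
  · exact (hLc.pow n).domRestrict.Icc_extend'
  · intro s
    exact one_le_pow₀ (hL1 _ (projIcc 0 b hb s).2)
  · intro t ht
    have : ∫ s in (0:ℝ)..t, l s * IccExtend hb ((Icc 0 b).domRestrict fun s => L s ^ n) s
        = ∫ s in (0:ℝ)..t, l s * L s ^ n := by
      refine intervalIntegral.integral_congr fun s hs => ?_
      rw [uIcc_of_le ht.1] at hs
      rw [IccExtend_of_mem hb _ ⟨hs.1, hs.2.trans ht.2⟩]
      rfl
    rw [this, IccExtend_of_mem hb _ ht]
    exact hid t ht

/-- A `1`-Lipschitz map into a bounded set that fixes the ball of radius `R`: clamp every coordinate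
to `[-R, R]`. -/
lemma exists_clamp (D : ℕ) {R : ℝ} (hR : 0 ≤ R) :
    ∃ (P : Euc D → Euc D) (R' : ℝ), (∀ x y, ‖P x - P y‖ ≤ ‖x - y‖) ∧
      (∀ x, ‖P x‖ ≤ R') ∧ ∀ x, ‖x‖ ≤ R → P x = x := by
  refine ⟨fun x => WithLp.toLp 2 fun i => max (-R) (min R (x i)), Real.sqrt (∑ _i : Fin D, R ^ 2),
    fun x y => ?_, fun x => ?_, fun x hx => ?_⟩
  · rw [EuclideanSpace.norm_eq, EuclideanSpace.norm_eq]
    refine Real.sqrt_le_sqrt (Finset.sum_le_sum fun i _ => ?_)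
    gcongr
    simp only [PiLp.sub_apply, Real.norm_eq_abs]
    refine (abs_max_sub_max_le_max _ _ _ _).trans ?_
    simp only [sub_self, abs_zero, abs_nonneg, sup_of_le_right]
    refine (abs_min_sub_min_le_max _ _ _ _).trans ?_
    simp
  · rw [EuclideanSpace.norm_eq]
    refine Real.sqrt_le_sqrt (Finset.sum_le_sum fun i _ => ?_)
    gcongr
    rw [Real.norm_eq_abs, abs_le]
    exact ⟨le_max_left _ _, max_le (by linarith) (min_le_left _ _)⟩
  · ext i
    have := (PiLp.norm_apply_le x i).trans hx
    rw [Real.norm_eq_abs, abs_le] at this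
    simp [this.1, this.2]

/-- Carathéodory existence with continuous dependence: if `w` is globally Lipschitz in space with an
integrable rate, and `X` is a solution on `[0, b]` starting at `x`, then from every `y` there starts
a solution on `[0, b]` whose distance to `X` is at most `C * ‖y - x‖`. Writing solutions as `m • Z`
with the weight `m` of `exists_weight` turns the Picard map into a `1/2`-contraction `Ψ y` of
`C([0, b], E)`, and `Ψ y`, `Ψ x` are at distance at most `‖y - x‖`. -/
lemma exists_solution_near {E : Type*} [NormedAddCommGroup E] [NormedSpace ℝ E] [CompleteSpace E]
    {b : ℝ} (hb : 0 ≤ b) {w : ℝ → E → E} {l : ℝ → ℝ} (hl : IntervalIntegrable l volume 0 b)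
    (hl0 : ∀ s ∈ Icc 0 b, 0 ≤ l s)
    (hlip : ∀ s ∈ Icc 0 b, ∀ x y, ‖w s x - w s y‖ ≤ l s * ‖x - y‖)
    (hint : ∀ Y : ℝ → E, Continuous Y → IntervalIntegrable (fun s => w s (Y s)) volume 0 b)
    {X : ℝ → E} (hXc : ContinuousOn X (Icc 0 b)) {x : E}
    (hX : ∀ t ∈ Icc 0 b, X t = x + ∫ s in (0:ℝ)..t, w s (X s)) :
    ∃ C : ℝ, 0 ≤ C ∧ ∀ y, ∃ Y : ℝ → E, ContinuousOn Y (Icc 0 b) ∧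
      (∀ t ∈ Icc 0 b, Y t = y + ∫ s in (0:ℝ)..t, w s (Y s)) ∧
      ∀ t ∈ Icc 0 b, ‖Y t - X t‖ ≤ C * ‖y - x‖ := by
  obtain ⟨m, hmc, hm1, hm⟩ := exists_weight hb hl hl0
  have hm0 : ∀ s, 0 < m s := fun s => zero_lt_one.trans_le (hm1 s)
  -- the curve `m • Z`, with `Z` extended to all times by constants
  let ext : C(Icc 0 b, E) → ℝ → E := fun Z s => m s • Z (projIcc 0 b hb s)
  have hext : ∀ Z, Continuous (ext Z) := fun Z =>
    hmc.smul (Z.continuous.comp continuous_projIcc)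
  have hcont : ∀ (y : E) (Z : C(Icc 0 b, E)), Continuous fun t : Icc 0 b =>
      (m t)⁻¹ • (y + ∫ s in (0:ℝ)..t, w s (ext Z s)) := by
    intro y Z
    have h1 := intervalIntegral.continuousOn_primitive_interval' (hint _ (hext Z)) left_mem_uIcc
    rw [uIcc_of_le hb, continuousOn_iff_continuous_domRestrict] at h1
    exact ((hmc.comp continuous_subtype_val).inv₀ fun t => (hm0 _).ne').smul
      (continuous_const.add h1)
  let Ψ : E → C(Icc 0 b, E) → C(Icc 0 b, E) := fun y Z => ⟨_, hcont y Z⟩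
  have hΨ : ∀ y Z (t : Icc (0:ℝ) b), Ψ y Z t = (m t)⁻¹ • (y + ∫ s in (0:ℝ)..t, w s (ext Z s)) :=
    fun _ _ _ => rfl
  have hcontr : ∀ y, ContractingWith (1/2) (Ψ y) := by
    intro y
    refine ⟨by norm_num, LipschitzWith.of_dist_le_mul fun Z W => ?_⟩
    rw [ContinuousMap.dist_le (by positivity)]
    rintro ⟨t, ht⟩
    have hmt := hm0 t
    rw [dist_eq_norm, hΨ, hΨ, ← smul_sub, add_sub_add_left_eq_sub,
      ← intervalIntegral.integral_sub (intervalIntegrable_sub (hint _ (hext Z)) hb ht)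
        (intervalIntegrable_sub (hint _ (hext W)) hb ht), norm_smul, norm_inv, Real.norm_of_nonneg hmt.le,
      inv_mul_le_iff₀ hmt]
    have hlm : IntervalIntegrable (fun s => l s * m s) volume 0 t :=
      (intervalIntegrable_sub hl hb ht).mul_continuousOn hmc.continuousOn
    calc ‖∫ s in (0:ℝ)..t, (w s (ext Z s) - w s (ext W s))‖
        ≤ ∫ s in (0:ℝ)..t, (l s * m s) * dist Z W := by
          refine intervalIntegral.norm_integral_le_of_norm_le ht.1 ?_ (hlm.mul_const _)
          refine Eventually.of_forall fun s hs => ?_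
          have hs' : s ∈ Icc 0 b := ⟨hs.1.le, hs.2.trans ht.2⟩
          refine (hlip s hs' _ _).trans ?_
          simp only [ext]
          rw [← smul_sub, norm_smul, Real.norm_of_nonneg (hm0 s).le, mul_assoc, ← dist_eq_norm]
          have := hl0 s hs'
          have := (hm0 s).le
          gcongr
          exact ContinuousMap.dist_apply_le_dist _
      _ = (∫ s in (0:ℝ)..t, l s * m s) * dist Z W := by
          rw [intervalIntegral.integral_mul_const]
      _ ≤ (m t / 2) * dist Z W := by
          gcongr
          exact hm t ht
      _ = m t * (((1/2 : NNReal) : ℝ) * dist Z W) := by push_cast; ring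
  have hfix : ∀ y Z, Function.IsFixedPt (Ψ y) Z →
      ∀ t ∈ Icc 0 b, ext Z t = y + ∫ s in (0:ℝ)..t, w s (ext Z s) := by
    intro y Z hZ t ht
    have h := congrArg (fun W : C(Icc 0 b, E) => W ⟨t, ht⟩) hZ.eq
    simp only [hΨ] at h
    simp only [ext] at h ⊢
    rw [projIcc_of_mem hb ht, ← h, smul_smul, mul_inv_cancel₀ (hm0 t).ne', one_smul]
  -- the rescaled given solution is the fixed point of `Ψ x`
  let ZX : C(Icc 0 b, E) := ⟨fun t => (m t)⁻¹ • X t, by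
    rw [continuousOn_iff_continuous_domRestrict] at hXc
    exact ((hmc.comp continuous_subtype_val).inv₀ fun t => (hm0 _).ne').smul hXc⟩
  have hZX : ∀ t ∈ Icc 0 b, ext ZX t = X t := by
    intro t ht
    simp only [ext, ZX, ContinuousMap.coe_mk]
    rw [projIcc_of_mem hb ht, smul_smul, mul_inv_cancel₀ (hm0 t).ne', one_smul]
  have hfixX : Function.IsFixedPt (Ψ x) ZX := by
    ext ⟨t, ht⟩
    rw [hΨ]
    change _ = (m t)⁻¹ • X t
    rw [hX t ht]
    congr 2
    refine intervalIntegral.integral_congr fun s hs => ?_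
    rw [uIcc_of_le ht.1] at hs
    simp only [hZX s ⟨hs.1, hs.2.trans ht.2⟩]
  obtain ⟨M, hM⟩ := (isCompact_Icc (a := 0) (b := b)).image hmc |>.bddAbove
  have hM' : ∀ t ∈ Icc 0 b, m t ≤ M := fun t ht => hM (mem_image_of_mem _ ht)
  have hM0 : 0 ≤ M := (hm0 0).le.trans (hM' 0 ⟨le_rfl, hb⟩)
  refine ⟨M * 2, by positivity, fun y => ?_⟩
  let ZY := ContractingWith.fixedPoint (Ψ y) (hcontr y)
  have hfixY : Function.IsFixedPt (Ψ y) ZY := (hcontr y).fixedPoint_isFixedPt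
  refine ⟨ext ZY, (hext _).continuousOn, hfix y ZY hfixY, fun t ht => ?_⟩
  have hd : dist ZY ZX ≤ ‖y - x‖ / (1 - ((1/2 : NNReal) : ℝ)) := by
    refine (hcontr y).dist_fixedPoint_fixedPoint_of_dist_le' (Ψ x) hfixY hfixX fun Z => ?_
    rw [ContinuousMap.dist_le (norm_nonneg _)]
    intro s
    rw [dist_eq_norm, hΨ, hΨ, ← smul_sub, add_sub_add_right_eq_sub, norm_smul, norm_inv,
      Real.norm_of_nonneg (hm0 s).le]
    exact mul_le_of_le_one_left (norm_nonneg _) (inv_le_one_of_one_le₀ (hm1 s))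
  rw [← hZX t ht]
  simp only [ext]
  rw [← smul_sub, norm_smul, Real.norm_of_nonneg (hm0 t).le, mul_assoc, ← dist_eq_norm]
  refine mul_le_mul (hM' t ht) ?_ dist_nonneg hM0
  refine (ContinuousMap.dist_apply_le_dist _).trans (hd.trans (le_of_eq ?_))
  push_cast
  ring

/-! ### The set of surviving initial points is open -/

/-- Lower semicontinuity of the existence time. The trajectory from `x` stays in a ball of radius
`R` up to a time `b > t`; composing the field with a clamp to a slightly larger box makes it
globally Lipschitz without affecting that trajectory. Solutions of the clamped equation from nearby
points stay within distance `1` of it, hence solve the original equation up to time `b`. -/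
lemma isOpen_lt_tau {D : ℕ} {T : ℝ} {v : ℝ → Euc D → Euc D} (hv : IsAdmissible T v)
    (F : MaxFlow T v) {t : ℝ} (ht : 0 ≤ t) : IsOpen {x | t < F.tau x} := by
  rw [Metric.isOpen_iff]
  intro x hx
  obtain ⟨b, htb, hbx⟩ := exists_between (show t < F.tau x from hx)
  have hb : 0 ≤ b := ht.trans htb.le
  have hbT : b ∈ Icc 0 T := ⟨hb, hbx.le.trans (F.tau_mem x).2⟩
  have hXc : ContinuousOn (fun s => F.X s x) (Icc 0 b) :=
    (F.sol x).1.mono fun s hs => ⟨hs.1, hs.2.trans_lt hbx⟩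
  obtain ⟨R, hR⟩ := (isCompact_Icc.image_of_continuousOn hXc).isBounded.exists_norm_le
  have hR' : ∀ s ∈ Icc 0 b, ‖F.X s x‖ ≤ R := fun s hs => hR _ (mem_image_of_mem _ hs)
  have hR0 : 0 ≤ R := (norm_nonneg _).trans (hR' 0 ⟨le_rfl, hb⟩)
  obtain ⟨P, R', hP1, hP2, hP3⟩ := exists_clamp D (show 0 ≤ R + 1 by linarith)
  have hPc : Continuous P :=
    (LipschitzWith.of_dist_le_mul (K := 1) fun x y => by
      simpa [dist_eq_norm] using hP1 x y).continuous
  have hK := isCompact_closedBall (0 : Euc D) R'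
  have hPK : ∀ z, P z ∈ Metric.closedBall (0 : Euc D) R' := fun z => by
    simpa using hP2 z
  have hIT : ∀ s ∈ Icc 0 b, s ∈ Icc 0 T := fun s hs => ⟨hs.1, hs.2.trans hbT.2⟩
  obtain ⟨C, hC0, hC⟩ := exists_solution_near hb (w := fun s z => v s (P z))
    (intervalIntegrable_fks hv hK hbT)
    (fun s hs => (fks_bounds hv hK (hIT s hs)).1)
    (fun s hs z z' => ((fks_bounds hv hK (hIT s hs)).2.2 _ (hPK z) _ (hPK z')).trans
      (mul_le_mul_of_nonneg_left (hP1 z z') (fks_bounds hv hK (hIT s hs)).1))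
    (fun Y hY => intervalIntegrable_comp hv hK hbT (hPc.comp hY).continuousOn
      fun s _ => hPK (Y s))
    hXc (x := x) (by
      intro s hs
      refine ((F.sol x).2 s ⟨hs.1, hs.2.trans_lt hbx⟩).trans ?_
      congr 1
      refine intervalIntegral.integral_congr fun r hr => ?_
      rw [uIcc_of_le hs.1] at hr
      simp only
      rw [hP3 _ ((hR' r ⟨hr.1, hr.2.trans hs.2⟩).trans (by linarith))])
  refine ⟨1 / (C + 1), by positivity, fun y hy => ?_⟩
  obtain ⟨Y, hYc, hY, hYX⟩ := hC y
  have hYR : ∀ s ∈ Icc 0 b, ‖Y s‖ ≤ R + 1 := by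
    intro s hs
    have h1 := hYX s hs
    have h2 : C * ‖y - x‖ ≤ 1 := by
      rw [Metric.mem_ball, dist_eq_norm, lt_div_iff₀ (by positivity)] at hy
      nlinarith [norm_nonneg (y - x)]
    have h3 := norm_le_norm_add_norm_sub' (Y s) (F.X s x)
    have h4 := hR' s hs
    linarith
  refine htb.trans_le (F.maximal y b hbT.2 Y ⟨hYc.mono Ico_subset_Icc_self, fun s hs => ?_⟩).1
  rw [hY s ⟨hs.1, hs.2.le⟩]
  congr 1
  refine intervalIntegral.integral_congr fun r hr => ?_
  rw [uIcc_of_le hs.1] at hr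
  rw [hP3 _ (hYR r ⟨hr.1, hr.2.trans hs.2.le⟩)]

/-! ### Monotonicity along trajectories and of the moments -/

/-- The exponent of the integrand of `M_α(μ_t)` is nonincreasing along each trajectory: between `t₁`
and `t₂` the norm grows by at most the arc length, which enters the damping term with the factor
`ε ≥ α`. -/
lemma weight_antitone {D : ℕ} {T : ℝ} {v : ℝ → Euc D → Euc D} (hv : IsAdmissible T v)
    (F : MaxFlow T v) {ε α : ℝ} (hα : 0 ≤ α) (hαε : α ≤ ε) {x : Euc D} {t₁ t₂ : ℝ}
    (h₁ : 0 ≤ t₁) (h₁₂ : t₁ ≤ t₂) (h₂ : t₂ < F.tau x) :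
    -(ε * ∫ s in (0:ℝ)..t₂, ‖v s (F.X s x)‖) + α * ‖F.X t₂ x‖ ≤
      -(ε * ∫ s in (0:ℝ)..t₁, ‖v s (F.X s x)‖) + α * ‖F.X t₁ x‖ := by
  have h02 : 0 ≤ t₂ := h₁.trans h₁₂
  have hXc : ContinuousOn (fun s => F.X s x) (Icc 0 t₂) :=
    (F.sol x).1.mono fun s hs => ⟨hs.1, hs.2.trans_lt h₂⟩
  have hi : IntervalIntegrable (fun s => v s (F.X s x)) volume 0 t₂ :=
    intervalIntegrable_comp hv (isCompact_Icc.image_of_continuousOn hXc)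
      ⟨h02, h₂.le.trans (F.tau_mem x).2⟩ hXc fun s hs => mem_image_of_mem _ hs
  have hi1 : IntervalIntegrable (fun s => v s (F.X s x)) volume 0 t₁ :=
    hi.mono_set (by rw [uIcc_of_le h02, uIcc_of_le h₁]; exact Icc_subset_Icc_right h₁₂)
  have hi2 : IntervalIntegrable (fun s => v s (F.X s x)) volume t₁ t₂ := hi1.symm.trans hi
  have e2 := (F.sol x).2 t₂ ⟨h02, h₂⟩
  have e1 := (F.sol x).2 t₁ ⟨h₁, h₁₂.trans_lt h₂⟩
  simp only at e1 e2
  have hv' := intervalIntegral.integral_add_adjacent_intervals hi1 hi2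
  have hn := intervalIntegral.integral_add_adjacent_intervals hi1.norm hi2.norm
  have hle := intervalIntegral.norm_integral_le_integral_norm (μ := volume)
    (f := fun s => v s (F.X s x)) h₁₂
  have hX : F.X t₂ x = F.X t₁ x + ∫ s in t₁..t₂, v s (F.X s x) := by
    rw [e2, e1, ← hv', add_assoc]
  have hnX : ‖F.X t₂ x‖ ≤ ‖F.X t₁ x‖ + ∫ s in t₁..t₂, ‖v s (F.X s x)‖ := by
    rw [hX]
    exact (norm_add_le _ _).trans (by gcongr)
  have hJ : 0 ≤ ∫ s in t₁..t₂, ‖v s (F.X s x)‖ := (norm_nonneg _).trans hle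
  rw [← hn]
  nlinarith [mul_le_mul_of_nonneg_left hnX hα, mul_le_mul_of_nonneg_right hαε hJ]

lemma moment_eq {D : ℕ} {T : ℝ} {v : ℝ → Euc D → Euc D} (F : MaxFlow T v)
    {ε : ℝ} {μ₀ : Measure (Euc D)} {μ : ℝ → Measure (Euc D)}
    (hμ : ∀ t ∈ Ico (0:ℝ) T, ∀ ψ : Euc D → ℝ≥0∞, Measurable ψ →
      ∫⁻ y, ψ y ∂(μ t) =
        ∫⁻ x in {x | t < F.tau x},
          ENNReal.ofReal (Real.exp (-(ε * ∫ s in (0:ℝ)..t, ‖v s (F.X s x)‖))) *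
            ψ (F.X t x) ∂μ₀) (α : ℝ) {t : ℝ} (ht : t ∈ Ico (0:ℝ) T) :
    ∫⁻ y, ENNReal.ofReal (Real.exp (α * ‖y‖)) ∂(μ t) =
      ∫⁻ x in {x | t < F.tau x}, ENNReal.ofReal (Real.exp
        (-(ε * ∫ s in (0:ℝ)..t, ‖v s (F.X s x)‖) + α * ‖F.X t x‖)) ∂μ₀ := by
  rw [hμ t ht _ (by fun_prop)]
  refine lintegral_congr fun x => ?_
  rw [← ENNReal.ofReal_mul (Real.exp_nonneg _), ← Real.exp_add]

/-- For `α = 0` this is the monotonicity of the total mass. Openness of `{x | t₂ < F.tau x}` enters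
through its measurability: the pointwise comparison holds on that set only, and for a nonmeasurable
set it would not give a comparison of the restricted integrals. -/
lemma moment_antitone {D : ℕ} {T : ℝ} {v : ℝ → Euc D → Euc D} (hv : IsAdmissible T v)
    (F : MaxFlow T v) {ε : ℝ} {μ₀ : Measure (Euc D)} {μ : ℝ → Measure (Euc D)}
    (hμ : ∀ t ∈ Ico (0:ℝ) T, ∀ ψ : Euc D → ℝ≥0∞, Measurable ψ →
      ∫⁻ y, ψ y ∂(μ t) =
        ∫⁻ x in {x | t < F.tau x},
          ENNReal.ofReal (Real.exp (-(ε * ∫ s in (0:ℝ)..t, ‖v s (F.X s x)‖))) *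
            ψ (F.X t x) ∂μ₀) {α : ℝ} (hα : 0 ≤ α) (hαε : α ≤ ε) {t₁ t₂ : ℝ}
    (h₁ : t₁ ∈ Ico (0:ℝ) T) (h₂ : t₂ ∈ Ico (0:ℝ) T) (h₁₂ : t₁ ≤ t₂) :
    ∫⁻ y, ENNReal.ofReal (Real.exp (α * ‖y‖)) ∂(μ t₂) ≤
      ∫⁻ y, ENNReal.ofReal (Real.exp (α * ‖y‖)) ∂(μ t₁) := by
  rw [moment_eq F hμ α h₁, moment_eq F hμ α h₂]
  refine (setLIntegral_mono' (isOpen_lt_tau hv F h₂.1).measurableSet fun x hx => ?_).trans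
    (lintegral_mono_set fun x (hx : t₂ < F.tau x) => (h₁₂.trans_lt hx : t₁ < F.tau x))
  exact ENNReal.ofReal_le_ofReal
    (Real.exp_le_exp.2 (weight_antitone hv F hα hαε h₁.1 h₁₂ hx))

/-- along the deficient flow, for `0 < α ≤ min{α₀, ε}` the α-exponential
moment `M_α(μ_t) = ∫ e^{α|y|} dμ_t` is finite and nonincreasing in `t`; in particular
the total mass is nonincreasing. -/
theorem stmt5 {D : ℕ} (hD : 0 < D) {T : ℝ} (hT : 0 < T)
    {v : ℝ → Euc D → Euc D} (hv : IsAdmissible T v) (F : MaxFlow T v)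
    {ε : ℝ} (hε : 0 < ε) (μ₀ : Measure (Euc D)) [IsFiniteMeasure μ₀]
    {α₀ : ℝ} (hα₀ : 0 < α₀)
    (hmom : ∫⁻ x, ENNReal.ofReal (Real.exp (α₀ * ‖x‖)) ∂μ₀ < ⊤)
    (μ : ℝ → Measure (Euc D))
    (hμ : ∀ t ∈ Ico (0:ℝ) T, ∀ ψ : Euc D → ℝ≥0∞, Measurable ψ →
      ∫⁻ y, ψ y ∂(μ t) =
        ∫⁻ x in {x | t < F.tau x},
          ENNReal.ofReal (Real.exp (-(ε * ∫ s in (0:ℝ)..t, ‖v s (F.X s x)‖))) *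
            ψ (F.X t x) ∂μ₀) :
    (∀ α : ℝ, 0 < α → α ≤ min α₀ ε →
      (∀ t ∈ Ico (0:ℝ) T, ∫⁻ y, ENNReal.ofReal (Real.exp (α * ‖y‖)) ∂(μ t) < ⊤) ∧
      (∀ t₁ ∈ Ico (0:ℝ) T, ∀ t₂ ∈ Ico (0:ℝ) T, t₁ ≤ t₂ →
        ∫⁻ y, ENNReal.ofReal (Real.exp (α * ‖y‖)) ∂(μ t₂) ≤
          ∫⁻ y, ENNReal.ofReal (Real.exp (α * ‖y‖)) ∂(μ t₁))) ∧
    (∀ t₁ ∈ Ico (0:ℝ) T, ∀ t₂ ∈ Ico (0:ℝ) T, t₁ ≤ t₂ →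
      μ t₂ univ ≤ μ t₁ univ) := by

  refine ⟨fun α hα hαm => ⟨fun t ht => ?_, fun t₁ h₁ t₂ h₂ h₁₂ => ?_⟩, fun t₁ h₁ t₂ h₂ h₁₂ => ?_⟩
  · have h0 : (0:ℝ) ∈ Ico 0 T := ⟨le_rfl, hT⟩
    refine (moment_antitone hv F hμ hα.le (hαm.trans (min_le_right _ _)) h0 ht ht.1).trans_lt
      (lt_of_le_of_lt ?_ hmom)
    rw [moment_eq F hμ α h0]
    refine (setLIntegral_le_lintegral _ _).trans (lintegral_mono fun x => ?_)
    have hX0 : F.X 0 x = x := by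
      have := (F.sol x).2 0 ⟨le_rfl, (F.tau_mem x).1⟩
      simpa using this
    refine ENNReal.ofReal_le_ofReal (Real.exp_le_exp.2 ?_)
    rw [hX0, intervalIntegral.integral_same, mul_zero, neg_zero, zero_add]
    exact mul_le_mul_of_nonneg_right (hαm.trans (min_le_left _ _)) (norm_nonneg _)
  · exact moment_antitone hv F hμ hα.le (hαm.trans (min_le_right _ _)) h₁ h₂ h₁₂
  -- the total mass is the moment with `α = 0`
  · simpa using moment_antitone hv F hμ le_rfl hε.le h₁ h₂ h₁₂
end
end

section
/- Let v be an admissible velocity field on [0,T] × ℝ^D, let ε > 0, and let μ_0 be a finite Borel measure on ℝ^D whose m-th moment ∫|x|^m dμ_0(x) is finite, where m ≥ 0. Define for t ∈ [0,T) the measure μ_t by ∫ ψ dμ_t = ∫_{S_t} exp(−ε ∫_0^t |v_s(X_s(x))| ds) · ψ(X_t(x)) dμ_0(x). Then for every t ∈ [0,T), ∫ |y|^m dμ_t(y) ≤ 2^m ∫ |x|^m dμ_0(x) + C(ε,m) · μ_0(ℝ^D), where C(ε,m) = sup_{s ≥ 0} (2s)^m e^{−εs} < ∞; in particular the m-th moments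 of μ_t stay bounded on [0,T). -/
/-!
Put `L = ∫₀ᵗ |v_s(X_s(x))| ds`. The integral equation gives `|X_t(x)| ≤ |x| + L`. If `L ≤ |x|`, then
`|X_t(x)|^m ≤ (2|x|)^m` and the damping factor `e^{-εL}` is at most `1`; otherwise
`|X_t(x)|^m e^{-εL} ≤ (2L)^m e^{-εL} ≤ C(ε,m)`. In either case
`e^{-εL} |X_t(x)|^m ≤ 2^m |x|^m + C(ε,m)`, and integrating this against `μ₀` yields the estimate.
-/

open MeasureTheory Set Filter Topology

noncomputable section

open scoped ENNReal

/-- The constant `C(ε,m)` is finite: `(2s)^m ≤ 1 + (2s)^n` for an integer `n ≥ m`, and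
`(εs)^n / n! ≤ e^{εs}`. -/
lemma bddAbove_rpow_mul_exp {ε : ℝ} (hε : 0 < ε) {m : ℝ} (hm : 0 ≤ m) :
    BddAbove ((fun s : ℝ => (2 * s) ^ m * Real.exp (-(ε * s))) '' Ici (0:ℝ)) := by
  obtain ⟨n, hn⟩ := exists_nat_ge m
  refine ⟨1 + (2 / ε) ^ n * n.factorial, ?_⟩
  rintro _ ⟨s, hs, rfl⟩
  have hs : 0 ≤ s := hs
  have hpow : (2 * s) ^ m ≤ 1 + (2 * s) ^ n := by
    rcases le_total (2 * s) 1 with h | h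
    · have h1 : (2 * s) ^ m ≤ 1 := Real.rpow_le_one (by positivity) h hm
      have h2 : 0 ≤ (2 * s) ^ n := by positivity
      linarith
    · have h1 := Real.rpow_le_rpow_of_exponent_le h hn
      rw [Real.rpow_natCast] at h1
      linarith
  have hfac := Real.pow_div_factorial_le_exp (ε * s) (by positivity) n
  rw [div_le_iff₀ (by positivity)] at hfac
  have hone : 1 ≤ Real.exp (ε * s) := Real.one_le_exp (by positivity)
  have hsplit : (2 * s) ^ n = (2 / ε) ^ n * (ε * s) ^ n := by
    rw [← mul_pow]
    congr 1
    field_simp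
  have hmul : (2 / ε) ^ n * (ε * s) ^ n ≤
      (2 / ε) ^ n * (Real.exp (ε * s) * n.factorial) := by gcongr
  simp only [Real.exp_neg]
  rw [← div_eq_mul_inv, div_le_iff₀ (Real.exp_pos _)]
  nlinarith

/-- The integrand of the `m`-th moment is controlled by its initial value, up to an additive
constant; `a`, `b`, `L` stand for `|x|`, `|X_t(x)|` and the length of the trajectory. -/
lemma exp_mul_rpow_le {ε : ℝ} (hε : 0 < ε) {m : ℝ} (hm : 0 ≤ m) {a b L : ℝ}
    (ha : 0 ≤ a) (hb : 0 ≤ b) (hL : 0 ≤ L) (h : b ≤ a + L) :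
    Real.exp (-(ε * L)) * b ^ m ≤ 2 ^ m * a ^ m +
      sSup ((fun s : ℝ => (2 * s) ^ m * Real.exp (-(ε * s))) '' Ici (0:ℝ)) := by
  have hC : ∀ s : ℝ, 0 ≤ s → (2 * s) ^ m * Real.exp (-(ε * s)) ≤
      sSup ((fun s : ℝ => (2 * s) ^ m * Real.exp (-(ε * s))) '' Ici (0:ℝ)) :=
    fun s hs => le_csSup (bddAbove_rpow_mul_exp hε hm) ⟨s, hs, rfl⟩
  rw [← Real.mul_rpow (by norm_num) ha]
  have hbm : 0 ≤ b ^ m := by positivity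
  rcases le_total L a with hLa | hLa
  · have h1 : b ^ m ≤ (2 * a) ^ m := Real.rpow_le_rpow hb (by linarith) hm
    have h2 : Real.exp (-(ε * L)) ≤ 1 := Real.exp_le_one_iff.2 (by nlinarith)
    have h3 := mul_le_of_le_one_left hbm h2
    have h4 := (by positivity : (0:ℝ) ≤ (2 * L) ^ m * Real.exp (-(ε * L))).trans (hC L hL)
    linarith
  · have h1 : b ^ m ≤ (2 * L) ^ m := Real.rpow_le_rpow hb (by linarith) hm
    have h2 := mul_le_mul_of_nonneg_left h1 (Real.exp_pos (-(ε * L))).le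
    have h3 : 0 ≤ (2 * a) ^ m := by positivity
    linarith [hC L hL]

/-- The distance travelled along a trajectory bounds its displacement. No integrability of
`s ↦ v s (X s)` is needed: without it the integral of the vector field is `0` by convention. -/
lemma IsSolOn.norm_le {D : ℕ} {v : ℝ → Euc D → Euc D} {x : Euc D} {σ : ℝ} {X : ℝ → Euc D}
    (hX : IsSolOn v x σ X) {t : ℝ} (ht : t ∈ Ico 0 σ) :
    ‖X t‖ ≤ ‖x‖ + ∫ s in (0:ℝ)..t, ‖v s (X s)‖ := by
  conv_lhs => rw [hX.2 t ht]
  refine (norm_add_le _ _).trans ?_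
  gcongr
  exact intervalIntegral.norm_integral_le_integral_norm ht.1

/-- along the deficient flow, the `m`-th moments of `μ_t` stay bounded:
`∫|y|^m dμ_t ≤ 2^m ∫|x|^m dμ₀ + C(ε,m)·μ₀(ℝ^D)` where
`C(ε,m) = sup_{s ≥ 0} (2s)^m e^{-εs} < ∞`. -/
theorem stmt6 {D : ℕ} (hD : 0 < D) {T : ℝ} (hT : 0 < T)
    {v : ℝ → Euc D → Euc D} (hv : IsAdmissible T v) (F : MaxFlow T v)
    {ε : ℝ} (hε : 0 < ε) (μ₀ : Measure (Euc D)) [IsFiniteMeasure μ₀]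
    {m : ℝ} (hm : 0 ≤ m)
    (hmom : ∫⁻ x, ENNReal.ofReal (‖x‖ ^ m) ∂μ₀ < ⊤)
    (μ : ℝ → Measure (Euc D))
    (hμ : ∀ t ∈ Ico (0:ℝ) T, ∀ ψ : Euc D → ℝ≥0∞, Measurable ψ →
      ∫⁻ y, ψ y ∂(μ t) =
        ∫⁻ x in {x | t < F.tau x},
          ENNReal.ofReal (Real.exp (-(ε * ∫ s in (0:ℝ)..t, ‖v s (F.X s x)‖))) *
            ψ (F.X t x) ∂μ₀) :
    BddAbove ((fun s : ℝ => (2 * s) ^ m * Real.exp (-(ε * s))) '' Ici (0:ℝ)) ∧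
    ∀ t ∈ Ico (0:ℝ) T,
      ∫⁻ y, ENNReal.ofReal (‖y‖ ^ m) ∂(μ t) ≤
        ENNReal.ofReal ((2:ℝ) ^ m) * ∫⁻ x, ENNReal.ofReal (‖x‖ ^ m) ∂μ₀ +
          ENNReal.ofReal
            (sSup ((fun s : ℝ => (2 * s) ^ m * Real.exp (-(ε * s))) '' Ici (0:ℝ))) *
            μ₀ univ := by
  have hbdd := bddAbove_rpow_mul_exp hε hm
  refine ⟨hbdd, fun t ht => ?_⟩
  set C := sSup ((fun s : ℝ => (2 * s) ^ m * Real.exp (-(ε * s))) '' Ici (0:ℝ)) with hCdef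
  have hC0 : 0 ≤ C := Real.sSup_nonneg (by
    rintro _ ⟨s, hs, rfl⟩
    have hs : 0 ≤ s := hs
    positivity)
  have hmeas : Measurable fun x : Euc D => ENNReal.ofReal (‖x‖ ^ m) := by fun_prop
  rw [hμ t ht _ hmeas]
  calc _ ≤ ∫⁻ x in {x | t < F.tau x},
        (ENNReal.ofReal (2 ^ m) * ENNReal.ofReal (‖x‖ ^ m) + ENNReal.ofReal C) ∂μ₀ := by
        -- The dominating function is measurable, so `{x | t < F.tau x}` need not be.
        refine setLIntegral_mono (by fun_prop) fun x hx => ?_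
        rw [← ENNReal.ofReal_mul (by positivity), ← ENNReal.ofReal_mul (by positivity),
          ← ENNReal.ofReal_add (by positivity) hC0]
        exact ENNReal.ofReal_le_ofReal (exp_mul_rpow_le hε hm (norm_nonneg _) (norm_nonneg _)
          (intervalIntegral.integral_nonneg ht.1 fun _ _ => norm_nonneg _)
          ((F.sol x).norm_le ⟨ht.1, hx⟩))
    _ ≤ ∫⁻ x, (ENNReal.ofReal (2 ^ m) * ENNReal.ofReal (‖x‖ ^ m) + ENNReal.ofReal C) ∂μ₀ :=
        setLIntegral_le_lintegral _ _
    _ = _ := by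
        rw [lintegral_add_right _ measurable_const, lintegral_const_mul _ hmeas, lintegral_const]
end
end

section
/- Let v be an admissible velocity field on [0,T] × ℝ^D, let ε > 0, let α_0 > 0, and let μ_0 be a finite Borel measure on ℝ^D with ∫ e^{α_0|x|} dμ_0(x) < ∞. Define for t ∈ [0,T) the measure μ_t by ∫ ψ dμ_t = ∫_{S_t} exp(−ε ∫_0^t |v_s(X_s(x))| ds) · ψ(X_t(x)) dμ_0(x). Then for every φ ∈ C¹(ℝ^D) which is bounded with bounded gradient and all 0 ≤ t_1 ≤ t_2 < T, |∫ φ dμ_{t_2} − ∫ φ dμ_{t_1}| ≤ (1+ε)·(sup|φ| + sup|∇φ|)·∫_{t_1}^{t_2} ∫_{ℝ^D} |v_s(x)| dμ_s(x) ds. -/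
/-!
Everything is pulled back to `μ₀`. With the weight `w_t(x) = exp (-ε ∫₀ᵗ |v_s(X_s(x))| ds)`,
set to `0` once the trajectory of `x` has died, the defining identity of `μ_t` gives
`∫ φ dμ_t = ∫ w_t(x) φ(X_t(x)) dμ₀(x)` and `∫ |v_s| dμ_s = ∫ w_s |v_s(X_s)| dμ₀`. By Tonelli the
estimate reduces to one along a single trajectory (`MaxFlow.pointwise_le`).

Let `L`, `B` bound `|∇φ|`, `|φ|`. If `x` is alive on `[p, t]`, then
`|w_t φ(X_t) - w_p φ(X_p)| ≤ L w_t |X_t - X_p| + B (w_p - w_t)`.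
Since `w` is nonincreasing, the first term is at most `L ∫ₚᵗ w |v(X)|`; since `w` is absolutely
continuous with `w' = -ε w |v(X)|`, the second equals `ε B ∫ₚᵗ w |v(X)|`.
If instead the trajectory dies at some `τ(x) ≤ t < T`, it has infinite length on `[0, τ(x))`:
a trajectory of finite length converges, and the local Carathéodory existence theorem
(`exists_local_sol`, by the contraction principle) would continue it
(`MaxFlow.exists_length_gt`). So the weight decays to `0` at `τ(x)` and the loss of mass is again
`w_p = ε ∫ₚ^τ w |v(X)|` (`MaxFlow.weight_le_flux`).

Measurability in `x` is obtained from the Lusin–Souslin theorem: the solution curves on `[0, q]`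
form a Borel subset of `C([0, q], ℝ^D)`, on which evaluation at `0` is injective by uniqueness,
so `S_q` is Borel and the flow is measurable on it. Joint measurability in `(s, x)` follows by
covering the domain of the flow with slabs `[0, q] × S_q`.
-/

open MeasureTheory Set Filter Topology

noncomputable section

open scoped ENNReal


/-! ### Carathéodory bounds and measurability of the field -/

lemma fks_spec {D : ℕ} {T : ℝ} {v : ℝ → Euc D → Euc D} (hv : IsAdmissible T v) {t : ℝ}
    (ht : t ∈ Icc (0:ℝ) T) {K : Set (Euc D)} (hK : IsCompact K) :
    0 ≤ fks v K t ∧ (∀ x ∈ K, ‖v t x‖ ≤ fks v K t) ∧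
      ∀ x ∈ K, ∀ y ∈ K, ‖v t x - v t y‖ ≤ fks v K t * ‖x - y‖ := by
  have hL := hv.locLip t ht
  have hbdd : BddAbove ((fun x => ‖v t x‖) '' K) :=
    (hK.image hL.continuous.norm).bddAbove
  obtain ⟨C, hC⟩ := LocallyLipschitzOn.exists_lipschitzOnWith_of_compact hK
    (hL.locallyLipschitzOn (s := K))
  set S : Set ℝ := {C : ℝ | 0 ≤ C ∧ LipschitzOnWith C.toNNReal (v t) K} with hS
  have hne : S.Nonempty := ⟨C, C.2, by simpa using hC⟩
  have hlip0 : 0 ≤ lipOn (v t) K := le_csInf hne fun c hc => hc.1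
  have hsup0 : 0 ≤ sSup ((fun x => ‖v t x‖) '' K) := by
    apply Real.sSup_nonneg
    rintro _ ⟨x, -, rfl⟩
    exact norm_nonneg _
  refine ⟨add_nonneg hsup0 hlip0, fun x hx => ?_, fun x hx y hy => ?_⟩
  · exact (le_csSup hbdd ⟨x, hx, rfl⟩).trans (le_add_of_nonneg_right hlip0)
  · have key : ‖v t x - v t y‖ ≤ lipOn (v t) K * ‖x - y‖ := by
      rcases eq_or_ne x y with rfl | hxy
      · simp
      have hpos : 0 < ‖x - y‖ := norm_pos_iff.2 (sub_ne_zero.2 hxy)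
      rw [← div_le_iff₀ hpos]
      refine le_csInf hne fun c hc => ?_
      rw [div_le_iff₀ hpos]
      have := hc.2.dist_le_mul x hx y hy
      rwa [Real.coe_toNNReal _ hc.1, dist_eq_norm, dist_eq_norm] at this
    refine key.trans (mul_le_mul_of_nonneg_right ?_ (norm_nonneg _))
    exact le_add_of_nonneg_left hsup0

/-- The field extended by zero to times outside `[0, T]`, where nothing is assumed on `v`. -/
def vcut {D : ℕ} (T : ℝ) (v : ℝ → Euc D → Euc D) (t : ℝ) (x : Euc D) : Euc D :=
  (Icc (0:ℝ) T).indicator (fun s => v s x) t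

lemma vcut_of_mem {D : ℕ} {T : ℝ} {v : ℝ → Euc D → Euc D} {t : ℝ} (ht : t ∈ Icc (0:ℝ) T)
    (x : Euc D) : vcut T v t x = v t x :=
  indicator_of_mem ht _

lemma measurable_vcut {D : ℕ} {T : ℝ} {v : ℝ → Euc D → Euc D} (hv : IsAdmissible T v) :
    Measurable fun p : ℝ × Euc D => vcut T v p.1 p.2 := by
  have h : Measurable (Function.uncurry fun (x : Euc D) (t : ℝ) => vcut T v t x) := by
    apply measurable_uncurry_of_continuous_of_measurable
    · intro t
      by_cases ht : t ∈ Icc (0:ℝ) T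
      · simpa only [vcut, indicator_of_mem ht] using (hv.locLip t ht).continuous
      · simpa only [vcut, indicator_of_notMem ht] using continuous_const
    · intro x
      exact (hv.meas x).indicator measurableSet_Icc
  exact h.comp measurable_swap

/-- The field is integrable along any continuous curve staying in a compact set; continuity
is only required on the open interval, so that the lemma applies up to a blow-up time. -/
lemma integrableOn_field {D : ℕ} {T : ℝ} {v : ℝ → Euc D → Euc D} (hv : IsAdmissible T v)
    {a b : ℝ} (ha : 0 ≤ a) (hb : b ≤ T) {X : ℝ → Euc D} (hX : ContinuousOn X (Ioo a b))
    {K : Set (Euc D)} (hK : IsCompact K) (hXK : ∀ s ∈ Ioo a b, X s ∈ K) :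
    IntegrableOn (fun s => v s (X s)) (Ioc a b) := by
  rw [integrableOn_Ioc_iff_integrableOn_Ioo]
  have hsub : ∀ s ∈ Ioo a b, s ∈ Icc (0:ℝ) T := fun s hs =>
    ⟨ha.trans hs.1.le, hs.2.le.trans hb⟩
  have hmeas : AEStronglyMeasurable (fun s => v s (X s)) (volume.restrict (Ioo a b)) := by
    have h1 : AEMeasurable (fun s => vcut T v s (X s)) (volume.restrict (Ioo a b)) :=
      (measurable_vcut hv).comp_aemeasurable
        (aemeasurable_id.prodMk (hX.aemeasurable measurableSet_Ioo))
    refine h1.aestronglyMeasurable.congr ?_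
    filter_upwards [ae_restrict_mem measurableSet_Ioo] with s hs
    exact vcut_of_mem (hsub s hs) _
  have hf : IntegrableOn (fks v K) (Ioo a b) :=
    (hv.integ K hK).mono_set fun s hs => ⟨ha.trans_lt hs.1, hs.2.le.trans hb⟩
  refine Integrable.mono' hf hmeas ?_
  filter_upwards [ae_restrict_mem measurableSet_Ioo] with s hs
  exact (fks_spec hv (hsub s hs) hK).2.1 _ (hXK s hs)

lemma integrableOn_field_Icc {D : ℕ} {T : ℝ} {v : ℝ → Euc D → Euc D} (hv : IsAdmissible T v)
    {a b : ℝ} (ha : 0 ≤ a) (hb : b ≤ T) {X : ℝ → Euc D} (hX : ContinuousOn X (Icc a b)) :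
    IntegrableOn (fun s => v s (X s)) (Ioc a b) :=
  integrableOn_field hv ha hb (hX.mono Ioo_subset_Icc_self) (isCompact_Icc.image_of_continuousOn hX)
    fun s hs => ⟨s, Ioo_subset_Icc_self hs, rfl⟩

lemma continuousOn_primitive {E : Type*} [NormedAddCommGroup E] [NormedSpace ℝ E]
    {a b : ℝ} (hab : a ≤ b) {f : ℝ → E} (hf : IntegrableOn f (Ioc a b)) :
    ContinuousOn (fun t => ∫ s in a..t, f s) (Icc a b) := by
  rw [← uIcc_of_le hab]
  apply intervalIntegral.continuousOn_primitive_interval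
  rwa [uIcc_of_le hab, integrableOn_Icc_iff_integrableOn_Ioc]

/-! ### Local existence and blow-up -/

/-- Carathéodory local existence: the Picard operator contracts the unit ball of
`C([a, b], ℝ^D)` around the constant `z` once `∫_a^b fks v (closedBall z 1) ≤ 1/2`. -/
lemma exists_local_sol {D : ℕ} {T : ℝ} {v : ℝ → Euc D → Euc D} (hv : IsAdmissible T v)
    {a : ℝ} (ha : 0 ≤ a) (haT : a < T) (z : Euc D) :
    ∃ b, a < b ∧ b ≤ T ∧ ∃ Z : ℝ → Euc D, ContinuousOn Z (Icc a b) ∧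
      ∀ t ∈ Icc a b, Z t = z + ∫ s in a..t, v s (Z s) := by
  set K := Metric.closedBall z 1 with hKdef
  have hK : IsCompact K := isCompact_closedBall z 1
  have hfT : IntegrableOn (fks v K) (Ioc a T) :=
    (hv.integ K hK).mono_set (Ioc_subset_Ioc_left ha)
  obtain ⟨b, hab, hbT, hsmall⟩ : ∃ b, a < b ∧ b ≤ T ∧ ∫ s in a..b, fks v K s ≤ 1 / 2 := by
    have hc : ContinuousOn (fun t => ∫ s in a..t, fks v K s) (Icc a T) := by
      exact continuousOn_primitive haT.le hfT
    have h1 : Tendsto (fun t => ∫ s in a..t, fks v K s) (𝓝[Icc a T] a) (𝓝 0) := by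
      have h := hc a (left_mem_Icc.2 haT.le)
      rwa [ContinuousWithinAt, intervalIntegral.integral_same] at h
    have h2 : ∀ᶠ t in 𝓝[>] a, (∫ s in a..t, fks v K s) < 1 / 2 := by
      have : 𝓝[>] a ≤ 𝓝[Icc a T] a := by
        rw [← nhdsWithin_Ioc_eq_nhdsGT haT]
        exact nhdsWithin_mono _ Ioc_subset_Icc_self
      exact this (h1.eventually (gt_mem_nhds (by norm_num)))
    have h3 : ∀ᶠ t in 𝓝[>] a, t ∈ Ioc a T := Ioc_mem_nhdsGT haT
    obtain ⟨b, hb1, hb2⟩ := (h2.and h3).exists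
    exact ⟨b, hb2.1, hb2.2, hb1.le⟩
  have hf : IntegrableOn (fks v K) (Ioc a b) := hfT.mono_set (Ioc_subset_Ioc_right hbT)
  have hsub : ∀ s ∈ Icc a b, s ∈ Icc (0:ℝ) T := fun s hs => ⟨ha.trans hs.1, hs.2.trans hbT⟩
  let e : C(Icc a b, Euc D) → ℝ → Euc D := fun Z => IccExtend hab.le Z
  have he : ∀ Z, Continuous (e Z) := fun Z => Z.continuous.Icc_extend'
  have hIntg : ∀ Z, IntegrableOn (fun s => v s (e Z s)) (Ioc a b) := fun Z =>
    integrableOn_field_Icc hv ha hbT (he Z).continuousOn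
  have hII : ∀ Z, ∀ t ∈ Icc a b, IntervalIntegrable (fun s => v s (e Z s)) volume a t := by
    intro Z t ht
    rw [intervalIntegrable_iff_integrableOn_Ioc_of_le ht.1]
    exact (hIntg Z).mono_set (Ioc_subset_Ioc_right ht.2)
  have hfII : ∀ t ∈ Icc a b, IntervalIntegrable (fks v K) volume a t := by
    intro t ht
    rw [intervalIntegrable_iff_integrableOn_Ioc_of_le ht.1]
    exact hf.mono_set (Ioc_subset_Ioc_right ht.2)
  have hfle : ∀ t ∈ Icc a b, ∫ s in a..t, fks v K s ≤ 1 / 2 := by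
    intro t ht
    refine le_trans ?_ hsmall
    apply intervalIntegral.integral_mono_interval le_rfl ht.1 ht.2
    · filter_upwards [ae_restrict_mem measurableSet_Ioc] with s hs
      exact (fks_spec hv (hsub s (Ioc_subset_Icc_self hs)) hK).1
    · exact hfII b (right_mem_Icc.2 hab.le)
  have hcont : ∀ Z, ContinuousOn (fun t => z + ∫ s in a..t, v s (e Z s)) (Icc a b) := by
    intro Z
    exact continuousOn_const.add (continuousOn_primitive hab.le (hIntg Z))
  let Γ : C(Icc a b, Euc D) → C(Icc a b, Euc D) := fun Z =>
    ⟨fun t => z + ∫ s in a..(t:ℝ), v s (e Z s), (hcont Z).domRestrict⟩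
  let z₀ : C(Icc a b, Euc D) := ContinuousMap.const _ z
  let B : Set C(Icc a b, Euc D) := Metric.closedBall z₀ 1
  have heB : ∀ Z ∈ B, ∀ s, e Z s ∈ K := by
    intro Z hZ s
    have h1 := (ContinuousMap.dist_apply_le_dist (f := Z) (g := z₀) (projIcc a b hab.le s)).trans
      (Metric.mem_closedBall.1 hZ)
    exact Metric.mem_closedBall.2 h1
  have hmaps : MapsTo Γ B B := by
    intro Z hZ
    rw [Metric.mem_closedBall, ContinuousMap.dist_le zero_le_one]
    rintro ⟨t, ht⟩
    have h1 : ‖∫ s in a..t, v s (e Z s)‖ ≤ ∫ s in a..t, fks v K s := by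
      apply intervalIntegral.norm_integral_le_of_norm_le ht.1 _ (hfII t ht)
      filter_upwards with s hs
      exact (fks_spec hv (hsub s ⟨hs.1.le, hs.2.trans ht.2⟩) hK).2.1 _ (heB Z hZ s)
    have h2 := hfle t ht
    change dist (z + ∫ s in a..t, v s (e Z s)) z ≤ 1
    rw [dist_eq_norm, add_sub_cancel_left]
    linarith
  have hlip : ∀ Z ∈ B, ∀ Z' ∈ B, dist (Γ Z) (Γ Z') ≤ (1 / 2) * dist Z Z' := by
    intro Z hZ Z' hZ'
    rw [ContinuousMap.dist_le (by positivity)]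
    rintro ⟨t, ht⟩
    change dist (z + ∫ s in a..t, v s (e Z s)) (z + ∫ s in a..t, v s (e Z' s)) ≤ _
    rw [dist_add_left, dist_eq_norm, ← intervalIntegral.integral_sub (hII Z t ht) (hII Z' t ht)]
    have h1 : ‖∫ s in a..t, (v s (e Z s) - v s (e Z' s))‖
        ≤ ∫ s in a..t, fks v K s * dist Z Z' := by
      apply intervalIntegral.norm_integral_le_of_norm_le ht.1 _ ((hfII t ht).mul_const _)
      filter_upwards with s hs
      have hF := fks_spec hv (hsub s ⟨hs.1.le, hs.2.trans ht.2⟩) hK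
      refine (hF.2.2 _ (heB Z hZ s) _ (heB Z' hZ' s)).trans
        (mul_le_mul_of_nonneg_left ?_ hF.1)
      rw [← dist_eq_norm]
      exact ContinuousMap.dist_apply_le_dist (f := Z) (g := Z') (projIcc a b hab.le s)
    rw [intervalIntegral.integral_mul_const] at h1
    exact h1.trans (mul_le_mul_of_nonneg_right (hfle t ht) dist_nonneg)
  have hcontr : ContractingWith (1 / 2) (hmaps.restrict Γ B B) := by
    refine ⟨by rw [← NNReal.coe_lt_coe]; norm_num, LipschitzWith.of_dist_le_mul ?_⟩
    rintro ⟨Z, hZ⟩ ⟨Z', hZ'⟩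
    have h := hlip Z hZ Z' hZ'
    rw [NNReal.coe_div, NNReal.coe_one, NNReal.coe_ofNat]
    exact h
  obtain ⟨Z, -, hfix, -⟩ := hcontr.exists_fixedPoint' Metric.isClosed_closedBall.isComplete hmaps
    (x := z₀) (Metric.mem_closedBall_self zero_le_one) (edist_ne_top _ _)
  refine ⟨b, hab, hbT, e Z, (he Z).continuousOn, fun t ht => ?_⟩
  have h1 : e Z t = Z ⟨t, ht⟩ := IccExtend_of_mem hab.le Z ht
  have h2 := congrArg (fun f : C(Icc a b, Euc D) => f ⟨t, ht⟩) hfix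
  rw [h1]
  exact h2.symm

lemma MaxFlow.continuousOn {D : ℕ} {T : ℝ} {v : ℝ → Euc D → Euc D} (F : MaxFlow T v) (x : Euc D) :
    ContinuousOn (fun t => F.X t x) (Ico 0 (F.tau x)) := (F.sol x).1

lemma MaxFlow.eq_integral {D : ℕ} {T : ℝ} {v : ℝ → Euc D → Euc D} (F : MaxFlow T v) {x : Euc D}
    {t : ℝ} (ht : t ∈ Ico 0 (F.tau x)) : F.X t x = x + ∫ s in (0:ℝ)..t, v s (F.X s x) :=
  (F.sol x).2 t ht

lemma MaxFlow.integrableOn {D : ℕ} {T : ℝ} {v : ℝ → Euc D → Euc D} (hv : IsAdmissible T v)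
    (F : MaxFlow T v) {x : Euc D} {t : ℝ} (ht : t < F.tau x) :
    IntegrableOn (fun s => v s (F.X s x)) (Ioc 0 t) :=
  integrableOn_field_Icc hv le_rfl (ht.le.trans (F.tau_mem x).2)
    ((F.continuousOn x).mono fun _ hs => ⟨hs.1, hs.2.trans_lt ht⟩)

/-- A trajectory that dies before `T` has infinite length: otherwise it would converge to a
point from which it could be continued. -/
lemma MaxFlow.exists_length_gt {D : ℕ} {T : ℝ} {v : ℝ → Euc D → Euc D} (hv : IsAdmissible T v)
    (F : MaxFlow T v) {x : Euc D} (hx : F.tau x < T) (M : ℝ) :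
    ∃ t ∈ Ico 0 (F.tau x), M < ∫ s in (0:ℝ)..t, ‖v s (F.X s x)‖ := by
  by_contra! hM
  have hτ := F.tau_mem x
  set τ := F.tau x with hτdef
  have hXK : ∀ s ∈ Ioo 0 τ, F.X s x ∈ Metric.closedBall x M := by
    intro s hs
    have hs' : s ∈ Ico 0 τ := Ioo_subset_Ico_self hs
    rw [Metric.mem_closedBall, F.eq_integral hs', dist_eq_norm, add_sub_cancel_left]
    exact (intervalIntegral.norm_integral_le_integral_norm hs.1.le).trans (hM s hs')
  have hIntg : IntegrableOn (fun s => v s (F.X s x)) (Ioc 0 τ) :=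
    integrableOn_field hv le_rfl hτ.2 ((F.continuousOn x).mono Ioo_subset_Ico_self)
      (isCompact_closedBall x M) hXK
  set P : ℝ → Euc D := fun t => x + ∫ s in (0:ℝ)..t, v s (F.X s x) with hP
  have hPc : ContinuousOn P (Icc 0 τ) :=
    continuousOn_const.add (continuousOn_primitive hτ.1.le hIntg)
  have hPX : ∀ s ∈ Ico 0 τ, P s = F.X s x := fun s hs => (F.eq_integral hs).symm
  obtain ⟨b, hτb, hbT, Z, hZc, hZ⟩ := exists_local_sol hv hτ.1.le hx (P τ)
  have hZτ : Z τ = P τ := by simpa using hZ τ (left_mem_Icc.2 hτb.le)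
  set Y : ℝ → Euc D := fun t => if t ≤ τ then P t else Z t with hY
  have hYP : ∀ t ≤ τ, Y t = P t := fun t ht => if_pos ht
  have hYZ : ∀ t, τ ≤ t → Y t = Z t := by
    intro t ht
    rcases ht.eq_or_lt with rfl | h
    · rw [hYP _ le_rfl, hZτ]
    · exact if_neg h.not_ge
  have hYc : ContinuousOn Y (Icc 0 b) := by
    rw [← Icc_union_Icc_eq_Icc hτ.1.le hτb.le]
    refine ContinuousOn.union_of_isClosed ?_ ?_ isClosed_Icc isClosed_Icc
    · exact hPc.congr fun t ht => hYP t ht.2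
    · exact hZc.congr fun t ht => hYZ t ht.1
  have hYI : IntegrableOn (fun s => v s (Y s)) (Ioc 0 b) :=
    integrableOn_field_Icc hv le_rfl hbT hYc
  have hsol1 : ∀ t ∈ Icc 0 τ, Y t = x + ∫ s in (0:ℝ)..t, v s (Y s) := by
    intro t ht
    rw [hYP t ht.2]
    change x + _ = x + _
    congr 1
    apply intervalIntegral.integral_congr_Ioo_of_le ht.1
    intro s hs
    have hs' : s ∈ Ico 0 τ := ⟨hs.1.le, hs.2.trans_le ht.2⟩
    simp only [hYP s hs'.2.le, hPX s hs']
  have hsolY : IsSolOn v x b Y := by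
    refine ⟨hYc.mono Ico_subset_Icc_self, fun t ht => ?_⟩
    rcases le_total t τ with h | h
    · exact hsol1 t ⟨ht.1, h⟩
    · have hII : ∀ p q, 0 ≤ p → p ≤ q → q ≤ b →
          IntervalIntegrable (fun s => v s (Y s)) volume p q := by
        intro p q hp hpq hq
        rw [intervalIntegrable_iff_integrableOn_Ioc_of_le hpq]
        exact hYI.mono_set (Ioc_subset_Ioc hp hq)
      rw [← intervalIntegral.integral_add_adjacent_intervals (hII 0 τ le_rfl hτ.1.le hτb.le)
        (hII τ t hτ.1.le h ht.2.le), ← add_assoc, ← hsol1 τ ⟨hτ.1.le, le_rfl⟩, hYZ t h,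
        hZ t ⟨h, ht.2.le⟩, hYP τ le_rfl]
      congr 1
      apply intervalIntegral.integral_congr_Ioo_of_le h
      intro s hs
      simp only [hYZ s hs.1.le]
  exact absurd (F.maximal x b hbT Y hsolY).1 (not_le.2 hτb)

/-! ### Measurability of the flow -/

/-- By uniqueness the initial-value map `Z ↦ Z 0` is injective on the Borel set of solution
curves in `C([0, q], ℝ^D)`, so by Lusin–Souslin the initial data for which the solution lives
on `[0, q]` and lies in `A` at time `t` form a Borel set. -/
lemma MaxFlow.exists_measurableSet {D : ℕ} {T : ℝ} {v : ℝ → Euc D → Euc D}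
    (hv : IsAdmissible T v) (F : MaxFlow T v) {t q : ℝ} (ht : 0 ≤ t) (htq : t < q) (hqT : q ≤ T)
    {A : Set (Euc D)} (hA : MeasurableSet A) :
    ∃ B : Set (Euc D), MeasurableSet B ∧ (∀ x ∈ B, q ≤ F.tau x ∧ F.X t x ∈ A) ∧
      ∀ x, q < F.tau x → F.X t x ∈ A → x ∈ B := by
  have hq : 0 ≤ q := ht.trans htq.le
  have hqpos : 0 < q := ht.trans_lt htq
  let C := C(Icc (0:ℝ) q, Euc D)
  let _ : MeasurableSpace C := borel C
  have : BorelSpace C := ⟨rfl⟩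
  let e : C → ℝ → Euc D := fun Z => IccExtend hq Z
  have he : ∀ Z, Continuous (e Z) := fun Z => Z.continuous.Icc_extend'
  have hev : ∀ s, Continuous fun Z : C => e Z s := fun s =>
    continuous_eval_const (projIcc 0 q hq s)
  have hjoint : Measurable fun p : C × ℝ => e p.1 p.2 := by
    have h : Measurable (Function.uncurry fun (s : ℝ) (Z : C) => e Z s) :=
      measurable_uncurry_of_continuous_of_measurable (fun Z => he Z) fun s => (hev s).measurable
    exact h.comp measurable_swap
  let I : ℝ → C → Euc D := fun s Z => ∫ r in Ioc 0 s, vcut T v r (e Z r)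
  have hI : ∀ s, Measurable (I s) := by
    intro s
    have h : Measurable fun p : C × ℝ => vcut T v p.2 (e p.1 p.2) :=
      (measurable_vcut hv).comp (measurable_snd.prodMk hjoint)
    exact (h.stronglyMeasurable.integral_prod_right' (ν := volume.restrict (Ioc 0 s))).measurable
  have hIeq : ∀ s ∈ Icc (0:ℝ) q, ∀ Z, I s Z = ∫ r in (0:ℝ)..s, v r (e Z r) := by
    intro s hs Z
    rw [intervalIntegral.integral_of_le hs.1]
    refine setIntegral_congr_fun measurableSet_Ioc fun r hr => ?_
    exact vcut_of_mem ⟨hr.1.le, hr.2.trans (hs.2.trans hqT)⟩ _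
  -- solution curves; testing the equation at a countable dense set of times suffices
  have : Nonempty (Icc (0:ℝ) q) := ⟨⟨0, le_rfl, hq⟩⟩
  let G : Set C := ⋂ n : ℕ, {Z | e Z (TopologicalSpace.denseSeq (Icc (0:ℝ) q) n) =
    e Z 0 + I (TopologicalSpace.denseSeq (Icc (0:ℝ) q) n) Z}
  have hG : MeasurableSet G := by
    refine MeasurableSet.iInter fun n => ?_
    exact measurableSet_eq_fun (hev _).measurable ((hev 0).measurable.add (hI _))
  have hGsol : ∀ Z, Z ∈ G ↔ ∀ s ∈ Icc (0:ℝ) q, e Z s = e Z 0 + ∫ r in (0:ℝ)..s, v r (e Z r) := by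
    intro Z
    constructor
    · intro hZ
      have hc : ContinuousOn (fun s => e Z 0 + ∫ r in (0:ℝ)..s, v r (e Z r)) (Icc 0 q) :=
        continuousOn_const.add (continuousOn_primitive hq
          (integrableOn_field_Icc hv le_rfl hqT (he Z).continuousOn))
      have h := Continuous.ext_on (TopologicalSpace.denseRange_denseSeq (Icc (0:ℝ) q))
        (f := fun s : Icc (0:ℝ) q => e Z s)
        ((he Z).comp continuous_subtype_val) hc.domRestrict (by
          rintro _ ⟨n, rfl⟩
          have := mem_iInter.1 hZ n
          simp only [mem_ofPred_eq] at this
          rw [hIeq _ (Subtype.prop _)] at this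
          exact this)
      intro s hs
      exact congrFun h ⟨s, hs⟩
    · intro h
      refine mem_iInter.2 fun n => ?_
      simp only [mem_ofPred_eq]
      rw [hIeq _ (Subtype.prop _)]
      exact h _ (Subtype.prop _)
  have hsol : ∀ Z ∈ G, IsSolOn v (e Z 0) q (e Z) := fun Z hZ =>
    ⟨(he Z).continuousOn, fun s hs => (hGsol Z).1 hZ s (Ico_subset_Icc_self hs)⟩
  have hmax := fun Z hZ => F.maximal (e Z 0) q hqT (e Z) (hsol Z hZ)
  have hinj : InjOn (fun Z : C => e Z 0) G := by
    intro Z hZ Z' hZ' h0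
    simp only at h0
    have heq : EqOn (e Z) (e Z') (Ico 0 q) := by
      intro s hs
      rw [(hmax Z hZ).2 s hs, (hmax Z' hZ').2 s hs, h0]
    have hcl : EqOn (e Z) (e Z') (Icc 0 q) := by
      have := heq.closure (he Z) (he Z')
      rwa [closure_Ico hqpos.ne] at this
    ext1 s
    have := hcl s.2
    rwa [show e Z s = Z s from IccExtend_of_mem hq Z s.2,
      show e Z' s = Z' s from IccExtend_of_mem hq Z' s.2] at this
  refine ⟨(fun Z : C => e Z 0) '' (G ∩ {Z | e Z t ∈ A}), ?_, ?_, ?_⟩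
  · exact (hG.inter ((hev t).measurable hA)).image_of_continuousOn_injOn
      (hev 0).continuousOn (hinj.mono inter_subset_left)
  · rintro _ ⟨Z, ⟨hZ, hZA⟩, rfl⟩
    refine ⟨(hmax Z hZ).1, ?_⟩
    rw [← (hmax Z hZ).2 t ⟨ht, htq⟩]
    exact hZA
  · intro x hx hxA
    have hc : ContinuousOn (fun s => F.X s x) (Icc 0 q) :=
      (F.continuousOn x).mono fun _ hs => ⟨hs.1, hs.2.trans_lt hx⟩
    let Z : C := ⟨fun s => F.X s x, hc.domRestrict⟩
    have heZ : ∀ s ∈ Icc (0:ℝ) q, e Z s = F.X s x := fun s hs => IccExtend_of_mem hq Z hs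
    have h0 : F.X 0 x = x := by
      simpa using F.eq_integral ⟨le_rfl, (F.tau_mem x).1⟩
    refine ⟨Z, ⟨(hGsol Z).2 fun s hs => ?_, ?_⟩, ?_⟩
    · rw [heZ s hs, heZ 0 ⟨le_rfl, hq⟩, h0, F.eq_integral ⟨hs.1, hs.2.trans_lt hx⟩]
      congr 1
      apply intervalIntegral.integral_congr_Ioo_of_le hs.1
      intro r hr
      simp only [heZ r ⟨hr.1.le, hr.2.le.trans hs.2⟩]
    · change e Z t ∈ A
      rwa [heZ t ⟨ht, htq.le⟩]
    · simp only [heZ 0 ⟨le_rfl, hq⟩, h0]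

lemma MaxFlow.measurableSet_preimage {D : ℕ} {T : ℝ} {v : ℝ → Euc D → Euc D}
    (hv : IsAdmissible T v) (F : MaxFlow T v) {t : ℝ} (ht : 0 ≤ t)
    {A : Set (Euc D)} (hA : MeasurableSet A) :
    MeasurableSet {x | t < F.tau x ∧ F.X t x ∈ A} := by
  have h : ∀ q : ℚ, ∃ B : Set (Euc D), MeasurableSet B ∧
      (∀ x ∈ B, t < F.tau x ∧ F.X t x ∈ A) ∧
      ∀ x, t < q → q < F.tau x → F.X t x ∈ A → x ∈ B := by
    intro q
    by_cases hq : t < q ∧ (q:ℝ) ≤ T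
    · obtain ⟨B, h1, h2, h3⟩ := F.exists_measurableSet hv ht hq.1 hq.2 hA
      exact ⟨B, h1, fun x hx => ⟨hq.1.trans_le (h2 x hx).1, (h2 x hx).2⟩, fun x _ => h3 x⟩
    · exact ⟨∅, .empty, by simp, fun x h1 h2 => (hq ⟨h1, h2.le.trans (F.tau_mem x).2⟩).elim⟩
  choose B hB1 hB2 hB3 using h
  have : {x | t < F.tau x ∧ F.X t x ∈ A} = ⋃ q : ℚ, B q := by
    ext x
    simp only [mem_ofPred_eq, mem_iUnion]
    constructor
    · rintro ⟨h1, h2⟩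
      obtain ⟨q, hq1, hq2⟩ := exists_rat_btwn h1
      exact ⟨q, hB3 q x hq1 hq2 h2⟩
    · rintro ⟨q, hq⟩
      exact hB2 q x hq
  rw [this]
  exact .iUnion hB1

lemma MaxFlow.measurableSet_lt_tau {D : ℕ} {T : ℝ} {v : ℝ → Euc D → Euc D}
    (hv : IsAdmissible T v) (F : MaxFlow T v) {t : ℝ} (ht : 0 ≤ t) :
    MeasurableSet {x | t < F.tau x} := by
  simpa using F.measurableSet_preimage hv ht MeasurableSet.univ

open Classical in
/-- The flow at time `t`, set to `0` where the trajectory no longer exists. -/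
def MaxFlow.Xcut {D : ℕ} {T : ℝ} {v : ℝ → Euc D → Euc D} (F : MaxFlow T v) (t : ℝ) (x : Euc D) :
    Euc D :=
  if t < F.tau x then F.X t x else 0

lemma MaxFlow.measurable_Xcut {D : ℕ} {T : ℝ} {v : ℝ → Euc D → Euc D}
    (hv : IsAdmissible T v) (F : MaxFlow T v) {t : ℝ} (ht : 0 ≤ t) :
    Measurable (F.Xcut t) := by
  intro A hA
  have h1 := F.measurableSet_preimage hv ht hA
  have h2 := F.measurableSet_lt_tau hv ht
  by_cases h0 : (0 : Euc D) ∈ A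
  · convert! h1.union h2.compl using 1
    ext x
    by_cases hx : t < F.tau x <;> simp [MaxFlow.Xcut, hx, h0]
  · convert! h1 using 1
    ext x
    by_cases hx : t < F.tau x <;> simp [MaxFlow.Xcut, hx, h0]

/-! ### The weight along a trajectory -/

lemma abs_exp_neg_sub_le {p q : ℝ} (hp : 0 ≤ p) (hq : 0 ≤ q) :
    |Real.exp (-p) - Real.exp (-q)| ≤ |p - q| := by
  wlog h : p ≤ q generalizing p q
  · rw [abs_sub_comm, abs_sub_comm p]
    exact this hq hp (le_of_not_ge h)
  have h1 : Real.exp (-q) ≤ Real.exp (-p) := Real.exp_le_exp.2 (by linarith)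
  rw [abs_of_nonneg (sub_nonneg.2 h1), abs_sub_comm, abs_of_nonneg (sub_nonneg.2 h)]
  have h2 : Real.exp (-q) = Real.exp (-p) * Real.exp (-(q - p)) := by
    rw [← Real.exp_add]; ring_nf
  have h3 : 1 - (q - p) ≤ Real.exp (-(q - p)) := Real.one_sub_le_exp_neg _
  have h4 : Real.exp (-p) ≤ 1 := Real.exp_le_one_iff.2 (by linarith)
  rw [h2]
  nlinarith [Real.exp_pos (-p)]

/-- Fundamental theorem of calculus for the absolutely continuous function
`exp (-ε ∫_0^s a)`. -/
lemma integral_exp_weight {a : ℝ → ℝ} (ha : ∀ s, 0 ≤ a s) {ε p t : ℝ} (hε : 0 < ε) (hp : 0 ≤ p)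
    (hpt : p ≤ t) (hIntg : IntegrableOn a (Ioc 0 t)) :
    Real.exp (-(ε * ∫ r in (0:ℝ)..p, a r)) - Real.exp (-(ε * ∫ r in (0:ℝ)..t, a r)) =
      ε * ∫ s in p..t, Real.exp (-(ε * ∫ r in (0:ℝ)..s, a r)) * a s := by
  set m : ℝ → ℝ := fun s => ∫ r in (0:ℝ)..s, a r with hm
  have h0t : 0 ≤ t := hp.trans hpt
  have hII : IntervalIntegrable a volume 0 t :=
    (intervalIntegrable_iff_integrableOn_Ioc_of_le h0t).2 hIntg
  have hm0 : ∀ s, 0 ≤ s → 0 ≤ m s := fun s hs =>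
    intervalIntegral.integral_nonneg hs fun r _ => ha r
  have hmAC : AbsolutelyContinuousOnInterval m 0 t :=
    hII.absolutelyContinuousOnInterval_intervalIntegral left_mem_uIcc
  have hwAC : AbsolutelyContinuousOnInterval (fun s => Real.exp (-(ε * m s))) 0 t := by
    have h1 := (hmAC.const_mul ε)
    refine tendsto_of_tendsto_of_tendsto_of_le_of_le' tendsto_const_nhds h1 ?_ ?_
    · exact Eventually.of_forall fun E => Finset.sum_nonneg fun i _ => dist_nonneg
    · filter_upwards [mem_inf_of_right (mem_principal_self _)] with E hE
      refine Finset.sum_le_sum fun i hi => ?_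
      have hE' := hE.1 i hi
      rw [uIcc_of_le h0t] at hE'
      exact abs_exp_neg_sub_le (mul_nonneg hε.le (hm0 _ hE'.1.1))
        (mul_nonneg hε.le (hm0 _ hE'.2.1))
  have hsub : uIcc p t ⊆ uIcc 0 t := by
    rw [uIcc_of_le hpt, uIcc_of_le h0t]
    exact Icc_subset_Icc_left hp
  have hFTC := (hwAC.mono hsub).integral_deriv_eq_sub
  have hderiv : ∫ s in p..t, deriv (fun s => Real.exp (-(ε * m s))) s =
      ∫ s in p..t, -ε * (Real.exp (-(ε * m s)) * a s) := by
    apply intervalIntegral.integral_congr_ae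
    filter_upwards [hII.ae_hasDerivAt_integral] with s hs hsm
    have h1 : HasDerivAt m (a s) s := hs (hsub (uIoc_subset_uIcc hsm)) 0 left_mem_uIcc
    have h2 : HasDerivAt (fun s => Real.exp (-(ε * m s)))
        (Real.exp (-(ε * m s)) * -(ε * a s)) s := ((h1.const_mul ε).neg).exp
    rw [h2.deriv]
    ring
  rw [hderiv, intervalIntegral.integral_const_mul] at hFTC
  linarith

open Classical in
/-- The density `exp (-ε ∫_0^s |v_r(X_r(x))| dr)` on `S_s`, zero elsewhere. -/
def MaxFlow.weight {D : ℕ} {T : ℝ} {v : ℝ → Euc D → Euc D} (F : MaxFlow T v) (ε s : ℝ)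
    (x : Euc D) : ℝ≥0∞ :=
  if 0 ≤ s ∧ s < F.tau x then
    ENNReal.ofReal (Real.exp (-(ε * ∫ r in (0:ℝ)..s, ‖v r (F.X r x)‖))) else 0

/-- The weighted speed `weight * |v_s(X_s(x))|`, zero off `S_s`. -/
def MaxFlow.flux {D : ℕ} {T : ℝ} {v : ℝ → Euc D → Euc D} (F : MaxFlow T v) (ε s : ℝ)
    (x : Euc D) : ℝ≥0∞ :=
  F.weight ε s x * ENNReal.ofReal ‖v s (F.Xcut s x)‖

/-- A function on `{0 ≤ s < τ(x)}`, extended by zero, is jointly measurable if on each slab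
`{0 ≤ s ≤ q < τ(x)}`, `q` rational, it agrees with a jointly measurable function. -/
lemma measurable_of_slabs {D : ℕ} {T : ℝ} {v : ℝ → Euc D → Euc D}
    (hv : IsAdmissible T v) (F : MaxFlow T v) {f : ℝ × Euc D → ℝ≥0∞}
    (hf0 : ∀ p, ¬ (0 ≤ p.1 ∧ p.1 < F.tau p.2) → f p = 0)
    (h : ∀ q : ℝ, 0 ≤ q → ∃ g : ℝ × Euc D → ℝ≥0∞, Measurable g ∧
      ∀ p, 0 ≤ p.1 → p.1 ≤ q → q < F.tau p.2 → f p = g p) : Measurable f := by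
  have h' : ∀ q : ℚ, ∃ g : ℝ × Euc D → ℝ≥0∞, Measurable g ∧ (∀ p, g p ≤ f p) ∧
      ∀ p, 0 ≤ p.1 → p.1 ≤ (q:ℝ) → q < F.tau p.2 → f p = g p := by
    intro q
    by_cases hq : (0:ℝ) ≤ q
    · obtain ⟨g, hg, hgf⟩ := h q hq
      refine ⟨({p : ℝ × Euc D | 0 ≤ p.1 ∧ p.1 ≤ q ∧ q < F.tau p.2}).indicator g,
        hg.indicator ?_, fun p => ?_, fun p h1 h2 h3 => ?_⟩
      · exact (measurableSet_le measurable_const measurable_fst).inter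
          ((measurableSet_le measurable_fst measurable_const).inter
            (measurable_snd (F.measurableSet_lt_tau hv hq)))
      · refine indicator_le' (fun p hp => (hgf p hp.1 hp.2.1 hp.2.2).ge) (fun p _ => zero_le) p
      · rw [indicator_of_mem (by exact ⟨h1, h2, h3⟩)]
        exact hgf p h1 h2 h3
    · exact ⟨0, measurable_const, fun p => zero_le, fun p h1 h2 _ => (hq (h1.trans h2)).elim⟩
  choose g hg hgf hfg using h'
  have : f = fun p => ⨆ q : ℚ, g q p := by
    ext p
    apply le_antisymm _ (iSup_le fun q => hgf q p)
    by_cases hp : 0 ≤ p.1 ∧ p.1 < F.tau p.2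
    · obtain ⟨q, hq1, hq2⟩ := exists_rat_btwn hp.2
      rw [hfg q p hp.1 hq1.le hq2]
      exact le_iSup (fun q => g q p) q
    · rw [hf0 p hp]
      exact zero_le
  rw [this]
  exact .iSup hg

open Classical in
/-- On a slab `[0, q] × S_q` the flow is continuous in time and measurable in space, hence
jointly measurable. -/
lemma MaxFlow.exists_measurable_slab {D : ℕ} {T : ℝ} {v : ℝ → Euc D → Euc D}
    (hv : IsAdmissible T v) (F : MaxFlow T v) {q : ℝ} (hq : 0 ≤ q) :
    ∃ Y : ℝ × Euc D → Euc D, Measurable Y ∧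
      ∀ p, 0 ≤ p.1 → p.1 ≤ q → q < F.tau p.2 → F.X p.1 p.2 = Y p := by
  have hqm := F.measurableSet_lt_tau hv hq
  refine ⟨Function.uncurry fun (s : ℝ) (x : Euc D) =>
    if q < F.tau x then F.X (projIcc 0 q hq s) x else 0, ?_, ?_⟩
  · apply measurable_uncurry_of_continuous_of_measurable
    · intro x
      by_cases hx : q < F.tau x
      · simp only [hx, if_true]
        have hc : ContinuousOn (fun s => F.X s x) (Icc 0 q) :=
          (F.continuousOn x).mono fun _ hs => ⟨hs.1, hs.2.trans_lt hx⟩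
        exact hc.domRestrict.comp continuous_projIcc
      · simp only [hx, if_false]
        exact continuous_const
    · intro s
      have h1 := F.measurable_Xcut hv (projIcc 0 q hq s).2.1
      have h2 : (fun x => if q < F.tau x then F.X (projIcc 0 q hq s) x else 0) =
          {x | q < F.tau x}.indicator (F.Xcut (projIcc 0 q hq s)) := by
        ext1 x
        by_cases hx : q < F.tau x
        · simp only [indicator, mem_ofPred_eq, hx, if_true, MaxFlow.Xcut,
            (projIcc 0 q hq s).2.2.trans_lt hx]
        · simp only [indicator, mem_ofPred_eq, hx, if_false]
      rw [h2]
      exact h1.indicator hqm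
  · rintro ⟨s, x⟩ h1 h2 h3
    simp only [Function.uncurry] at *
    rw [if_pos h3, projIcc_of_mem hq ⟨h1, h2⟩]

lemma MaxFlow.measurable_weight {D : ℕ} {T : ℝ} {v : ℝ → Euc D → Euc D}
    (hv : IsAdmissible T v) (F : MaxFlow T v) (ε : ℝ) :
    Measurable fun p : ℝ × Euc D => F.weight ε p.1 p.2 := by
  refine measurable_of_slabs hv F (fun p hp => if_neg hp) fun q hq => ?_
  obtain ⟨Y, hY, hXY⟩ := F.exists_measurable_slab hv hq
  -- the integrand, cut off in the variable `r` so that the domain of integration is fixed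
  let k : (ℝ × Euc D) × ℝ → ℝ := {z | 0 < z.2 ∧ z.2 ≤ z.1.1}.indicator
    fun z => ‖vcut T v z.2 (Y (z.2, z.1.2))‖
  have hk : Measurable k := by
    refine Measurable.indicator ?_ ?_
    · exact ((measurable_vcut hv).comp (measurable_snd.prodMk (hY.comp
        (measurable_snd.prodMk (measurable_snd.comp measurable_fst))))).norm
    · exact (measurableSet_lt measurable_const measurable_snd).inter
        (measurableSet_le measurable_snd (measurable_fst.comp measurable_fst))
  have hkI : Measurable fun p : ℝ × Euc D => ∫ r, k (p, r) :=
    (hk.stronglyMeasurable.integral_prod_right' (ν := volume)).measurable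
  refine ⟨fun p => ENNReal.ofReal (Real.exp (-(ε * ∫ r, k (p, r)))),
    (Real.measurable_exp.comp ((hkI.const_mul ε).neg)).ennreal_ofReal, ?_⟩
  rintro ⟨s, x⟩ h1 h2 h3
  simp only at h1 h2 h3
  rw [MaxFlow.weight, if_pos ⟨h1, h2.trans_lt h3⟩]
  have : ∫ r, k ((s, x), r) = ∫ r in (0:ℝ)..s, ‖v r (F.X r x)‖ := by
    rw [intervalIntegral.integral_of_le h1, ← integral_indicator measurableSet_Ioc]
    congr 1
    ext r
    by_cases hr : r ∈ Ioc 0 s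
    · have hr' : ((s, x), r) ∈ {z : (ℝ × Euc D) × ℝ | 0 < z.2 ∧ z.2 ≤ z.1.1} := hr
      have hrq : r ≤ q := hr.2.trans h2
      simp only [k]
      rw [indicator_of_mem hr, indicator_of_mem hr',
        vcut_of_mem ⟨hr.1.le, hrq.trans (h3.le.trans (F.tau_mem x).2)⟩,
        ← hXY (r, x) hr.1.le hrq h3]
    · have hr' : ((s, x), r) ∉ {z : (ℝ × Euc D) × ℝ | 0 < z.2 ∧ z.2 ≤ z.1.1} := hr
      simp only [k]
      rw [indicator_of_notMem hr, indicator_of_notMem hr']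
  simp only [this]

lemma MaxFlow.measurable_flux {D : ℕ} {T : ℝ} {v : ℝ → Euc D → Euc D}
    (hv : IsAdmissible T v) (F : MaxFlow T v) (ε : ℝ) :
    Measurable fun p : ℝ × Euc D => F.flux ε p.1 p.2 := by
  refine measurable_of_slabs hv F (fun p hp => ?_) fun q hq => ?_
  · rw [MaxFlow.flux, MaxFlow.weight, if_neg hp, zero_mul]
  obtain ⟨Y, hY, hXY⟩ := F.exists_measurable_slab hv hq
  refine ⟨fun p => F.weight ε p.1 p.2 * ENNReal.ofReal ‖vcut T v p.1 (Y p)‖,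
    (F.measurable_weight hv ε).mul
      ((measurable_vcut hv).comp (measurable_fst.prodMk hY)).norm.ennreal_ofReal, ?_⟩
  intro p h1 h2 h3
  beta_reduce
  rw [MaxFlow.flux, MaxFlow.Xcut, if_pos (h2.trans_lt h3), ← hXY p h1 h2 h3,
    vcut_of_mem ⟨h1, h2.trans (h3.le.trans (F.tau_mem p.2).2)⟩]

/-- Along a trajectory alive at time `t`, the flux `J = ∫_p^t w |v|` measures the loss of weight
exactly, and dominates the final weight times the length since the weight decreases. -/
lemma MaxFlow.exists_flux {D : ℕ} {T : ℝ} {v : ℝ → Euc D → Euc D} (hv : IsAdmissible T v)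
    (F : MaxFlow T v) {ε : ℝ} (hε : 0 < ε) {x : Euc D} {p t : ℝ} (hp : 0 ≤ p) (hpt : p ≤ t)
    (ht : t < F.tau x) :
    ∃ J : ℝ, 0 ≤ J ∧ ∫⁻ s in Ioc p t, F.flux ε s x = ENNReal.ofReal J ∧
      (F.weight ε p x).toReal - (F.weight ε t x).toReal = ε * J ∧
      (F.weight ε t x).toReal * ‖F.X t x - F.X p x‖ ≤ J := by
  set a : ℝ → ℝ := fun s => ‖v s (F.X s x)‖ with ha
  set m : ℝ → ℝ := fun s => ∫ r in (0:ℝ)..s, a r with hm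
  have ha0 : ∀ s, 0 ≤ a s := fun s => norm_nonneg _
  have h0t : 0 ≤ t := hp.trans hpt
  have hvint : IntegrableOn (fun s => v s (F.X s x)) (Ioc 0 t) := F.integrableOn hv ht
  have haint : IntegrableOn a (Ioc 0 t) := hvint.norm
  have hvII : ∀ q r, 0 ≤ q → q ≤ r → r ≤ t →
      IntervalIntegrable (fun s => v s (F.X s x)) volume q r := fun q r hq hqr hr =>
    (intervalIntegrable_iff_integrableOn_Ioc_of_le hqr).2 (hvint.mono_set (Ioc_subset_Ioc hq hr))
  have haII : ∀ q r, 0 ≤ q → q ≤ r → r ≤ t → IntervalIntegrable a volume q r :=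
    fun q r hq hqr hr => (hvII q r hq hqr hr).norm
  have hmc : ContinuousOn m (Icc 0 t) := continuousOn_primitive h0t haint
  have hwc : ContinuousOn (fun s => Real.exp (-(ε * m s))) (Icc p t) :=
    (Real.continuous_exp.comp_continuousOn ((hmc.const_smul ε).neg)).mono (Icc_subset_Icc_left hp)
  have hwa : IntervalIntegrable (fun s => Real.exp (-(ε * m s)) * a s) volume p t :=
    (haII p t hp hpt le_rfl).continuousOn_mul (by rwa [uIcc_of_le hpt])
  have hw : ∀ s, 0 ≤ s → s ≤ t → F.weight ε s x = ENNReal.ofReal (Real.exp (-(ε * m s))) :=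
    fun s h1 h2 => if_pos ⟨h1, h2.trans_lt ht⟩
  have hwR : ∀ s, 0 ≤ s → s ≤ t → (F.weight ε s x).toReal = Real.exp (-(ε * m s)) := by
    intro s h1 h2
    rw [hw s h1 h2, ENNReal.toReal_ofReal (Real.exp_pos _).le]
  have hpos : ∀ s, 0 ≤ Real.exp (-(ε * m s)) * a s := fun s =>
    mul_nonneg (Real.exp_pos _).le (ha0 s)
  refine ⟨∫ s in p..t, Real.exp (-(ε * m s)) * a s,
    intervalIntegral.integral_nonneg hpt fun s _ => hpos s, ?_, ?_, ?_⟩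
  · rw [intervalIntegral.integral_of_le hpt, ofReal_integral_eq_lintegral_ofReal
      ((intervalIntegrable_iff_integrableOn_Ioc_of_le hpt).1 hwa)
      (Eventually.of_forall fun s => hpos s)]
    refine setLIntegral_congr_fun measurableSet_Ioc fun s hs => ?_
    have hs0 : 0 ≤ s := hp.trans hs.1.le
    rw [MaxFlow.flux, hw s hs0 hs.2, MaxFlow.Xcut, if_pos (hs.2.trans_lt ht),
      ← ENNReal.ofReal_mul (Real.exp_pos _).le]
  · rw [hwR p hp hpt, hwR t h0t le_rfl]
    exact integral_exp_weight ha0 hε hp hpt haint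
  · have hX : F.X t x - F.X p x = ∫ s in p..t, v s (F.X s x) := by
      rw [F.eq_integral ⟨h0t, ht⟩, F.eq_integral ⟨hp, hpt.trans_lt ht⟩, add_sub_add_left_eq_sub,
        intervalIntegral.integral_interval_sub_left (hvII 0 t le_rfl h0t le_rfl)
          (hvII 0 p le_rfl hp hpt)]
    rw [hwR t h0t le_rfl, hX]
    calc Real.exp (-(ε * m t)) * ‖∫ s in p..t, v s (F.X s x)‖
        ≤ Real.exp (-(ε * m t)) * ∫ s in p..t, a s :=
          mul_le_mul_of_nonneg_left (intervalIntegral.norm_integral_le_integral_norm hpt)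
            (Real.exp_pos _).le
      _ = ∫ s in p..t, Real.exp (-(ε * m t)) * a s := by
          rw [intervalIntegral.integral_const_mul]
      _ ≤ _ := by
          refine intervalIntegral.integral_mono_on hpt
            ((haII p t hp hpt le_rfl).const_mul _) hwa fun s hs => ?_
          refine mul_le_mul_of_nonneg_right (Real.exp_le_exp.2 ?_) (ha0 s)
          have : m s ≤ m t := intervalIntegral.integral_mono_interval le_rfl (hp.trans hs.1) hs.2
            (Eventually.of_forall ha0) (haII 0 t le_rfl h0t le_rfl)
          have := mul_le_mul_of_nonneg_left this hε.le
          linarith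

/-- A trajectory dying in `(p, t]` loses its whole weight continuously, since its length is
infinite: no mass disappears by a jump. -/
lemma MaxFlow.weight_le_flux {D : ℕ} {T : ℝ} {v : ℝ → Euc D → Euc D} (hv : IsAdmissible T v)
    (F : MaxFlow T v) {ε : ℝ} (hε : 0 < ε) {x : Euc D} {p t : ℝ} (hp : 0 ≤ p)
    (hpx : p < F.tau x) (hxt : F.tau x ≤ t) (htT : t < T) :
    ENNReal.ofReal (F.weight ε p x).toReal ≤
      ENNReal.ofReal ε * ∫⁻ s in Ioc p t, F.flux ε s x := by
  refine ENNReal.le_of_forall_pos_le_add fun δ hδ _ => ?_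
  set m : ℝ → ℝ := fun s => ∫ r in (0:ℝ)..s, ‖v r (F.X r x)‖ with hm
  obtain ⟨s, hs, hsM⟩ := F.exists_length_gt hv (hxt.trans_lt htT)
    (max (m p) (-Real.log δ / ε))
  have hps : p ≤ s := by
    by_contra! h
    have : m s ≤ m p := intervalIntegral.integral_mono_interval le_rfl hs.1 h.le
      (Eventually.of_forall fun r => norm_nonneg _)
      ((intervalIntegrable_iff_integrableOn_Ioc_of_le hp).2 (F.integrableOn hv hpx).norm)
    exact absurd ((le_max_left _ _).trans_lt hsM) this.not_gt
  obtain ⟨J, hJ0, hJ, hJw, -⟩ := F.exists_flux hv hε hp hps hs.2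
  have hws : (F.weight ε s x).toReal ≤ δ := by
    rw [MaxFlow.weight, if_pos ⟨hs.1, hs.2⟩, ENNReal.toReal_ofReal (Real.exp_pos _).le]
    have h1 : -Real.log δ / ε < m s := (le_max_right _ _).trans_lt hsM
    rw [div_lt_iff₀ hε] at h1
    rw [← Real.exp_log (show (0:ℝ) < δ from hδ)]
    apply Real.exp_le_exp.2
    simp only [hm] at h1
    linarith
  calc ENNReal.ofReal (F.weight ε p x).toReal ≤ ENNReal.ofReal (ε * J + δ) :=
        ENNReal.ofReal_le_ofReal (by linarith)
    _ = ENNReal.ofReal ε * (∫⁻ r in Ioc p s, F.flux ε r x) + δ := by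
        rw [hJ, ENNReal.ofReal_add (mul_nonneg hε.le hJ0) δ.coe_nonneg, ENNReal.ofReal_mul hε.le,
          ENNReal.ofReal_coe_nnreal]
    _ ≤ _ := by
        gcongr
        exact hs.2.le.trans hxt

/-- The estimate of the theorem along a single trajectory. -/
lemma MaxFlow.pointwise_le {D : ℕ} {T : ℝ} {v : ℝ → Euc D → Euc D} (hv : IsAdmissible T v)
    (F : MaxFlow T v) {ε : ℝ} (hε : 0 < ε) {φ : Euc D → ℝ} {B L : ℝ} (hL0 : 0 ≤ L)
    (hB : ∀ y, |φ y| ≤ B) (hL : ∀ y z, |φ y - φ z| ≤ L * ‖y - z‖)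
    (x : Euc D) {p t : ℝ} (hp : 0 ≤ p) (hpt : p ≤ t) (htT : t < T) :
    ENNReal.ofReal |(F.weight ε t x).toReal * φ (F.Xcut t x) -
        (F.weight ε p x).toReal * φ (F.Xcut p x)| ≤
      ENNReal.ofReal (ε * B + L) * ∫⁻ s in Ioc p t, F.flux ε s x := by
  have hB0 : 0 ≤ B := (abs_nonneg _).trans (hB 0)
  have hdead : ∀ s, F.tau x ≤ s → F.weight ε s x = 0 := fun s hs =>
    if_neg fun h => h.2.not_ge hs
  rcases lt_or_ge t (F.tau x) with ht | ht
  · obtain ⟨J, hJ0, hJ, hJw, hJX⟩ := F.exists_flux hv hε hp hpt ht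
    rw [hJ, ← ENNReal.ofReal_mul (by positivity)]
    apply ENNReal.ofReal_le_ofReal
    rw [MaxFlow.Xcut, MaxFlow.Xcut, if_pos ht, if_pos (hpt.trans_lt ht)]
    set w := (F.weight ε t x).toReal
    set w' := (F.weight ε p x).toReal
    have hw : 0 ≤ w := ENNReal.toReal_nonneg
    have e1 : w * φ (F.X t x) - w' * φ (F.X p x) =
        w * (φ (F.X t x) - φ (F.X p x)) - (w' - w) * φ (F.X p x) := by ring
    rw [e1, hJw]
    refine (abs_sub _ _).trans ?_
    rw [abs_mul, abs_mul, abs_of_nonneg hw, abs_of_nonneg (mul_nonneg hε.le hJ0)]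
    have e2 := mul_le_mul_of_nonneg_left (hL (F.X t x) (F.X p x)) hw
    have e3 := mul_le_mul_of_nonneg_left hJX hL0
    have e4 := mul_le_mul_of_nonneg_left (hB (F.X p x)) (mul_nonneg hε.le hJ0)
    linarith
  · rw [hdead t ht]
    rcases lt_or_ge p (F.tau x) with hpx | hpx
    · have h1 := F.weight_le_flux hv hε hp hpx ht htT
      have h2 : |(0:ℝ≥0∞).toReal * φ (F.Xcut t x) -
          (F.weight ε p x).toReal * φ (F.Xcut p x)| ≤ B * (F.weight ε p x).toReal := by
        rw [ENNReal.toReal_zero, zero_mul, zero_sub, abs_neg, abs_mul,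
          abs_of_nonneg ENNReal.toReal_nonneg, mul_comm]
        exact mul_le_mul_of_nonneg_right (hB _) ENNReal.toReal_nonneg
      calc _ ≤ ENNReal.ofReal (B * (F.weight ε p x).toReal) := ENNReal.ofReal_le_ofReal h2
        _ = ENNReal.ofReal B * ENNReal.ofReal (F.weight ε p x).toReal := ENNReal.ofReal_mul hB0
        _ ≤ ENNReal.ofReal B * (ENNReal.ofReal ε * ∫⁻ s in Ioc p t, F.flux ε s x) := by gcongr
        _ = ENNReal.ofReal (ε * B) * ∫⁻ s in Ioc p t, F.flux ε s x := by
            rw [← mul_assoc, ← ENNReal.ofReal_mul hB0, mul_comm B]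
        _ ≤ _ := by
            gcongr
            linarith
    · rw [hdead p hpx]
      simp

/-! ### The estimate for the pushed-forward measures -/

/-- narrow-type continuity estimate
`|∫φ dμ_{t₂} − ∫φ dμ_{t₁}| ≤ (1+ε)(sup|φ| + sup|∇φ|) ∫_{t₁}^{t₂} ∫ |v_s| dμ_s ds`
for `φ ∈ C¹` bounded with bounded gradient. -/
theorem stmt7 {D : ℕ} (hD : 0 < D) {T : ℝ} (hT : 0 < T)
    {v : ℝ → Euc D → Euc D} (hv : IsAdmissible T v) (F : MaxFlow T v)
    {ε : ℝ} (hε : 0 < ε) (μ₀ : Measure (Euc D)) [IsFiniteMeasure μ₀]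
    {α₀ : ℝ} (hα₀ : 0 < α₀)
    (hmom : ∫⁻ x, ENNReal.ofReal (Real.exp (α₀ * ‖x‖)) ∂μ₀ < ⊤)
    (μ : ℝ → Measure (Euc D))
    (hμ : ∀ t ∈ Ico (0:ℝ) T, ∀ ψ : Euc D → ℝ≥0∞, Measurable ψ →
      ∫⁻ y, ψ y ∂(μ t) =
        ∫⁻ x in {x | t < F.tau x},
          ENNReal.ofReal (Real.exp (-(ε * ∫ s in (0:ℝ)..t, ‖v s (F.X s x)‖))) *
            ψ (F.X t x) ∂μ₀)
    (φ : Euc D → ℝ) (hφ : ContDiff ℝ 1 φ)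
    (hφb : BddAbove (range fun x => |φ x|))
    (hφg : BddAbove (range fun x => ‖gradient φ x‖))
    {t₁ t₂ : ℝ} (h0 : 0 ≤ t₁) (h12 : t₁ ≤ t₂) (h2T : t₂ < T) :
    ENNReal.ofReal |(∫ y, φ y ∂(μ t₂)) - ∫ y, φ y ∂(μ t₁)| ≤
      ENNReal.ofReal
          ((1 + ε) * (sSup (range fun x => |φ x|) + sSup (range fun x => ‖gradient φ x‖))) *
        ∫⁻ s in Ioc t₁ t₂, ∫⁻ x, ENNReal.ofReal ‖v s x‖ ∂(μ s) := by
  classical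
  set B := sSup (range fun x => |φ x|)
  set L := sSup (range fun x => ‖gradient φ x‖)
  have hB : ∀ y, |φ y| ≤ B := fun y => le_csSup hφb ⟨y, rfl⟩
  have hG : ∀ y, ‖gradient φ y‖ ≤ L := fun y => le_csSup hφg ⟨y, rfl⟩
  have hB0 : 0 ≤ B := (abs_nonneg _).trans (hB 0)
  have hL0 : 0 ≤ L := (norm_nonneg _).trans (hG 0)
  have hL : ∀ y z, |φ y - φ z| ≤ L * ‖y - z‖ := by
    intro y z
    refine Convex.norm_image_sub_le_of_norm_fderiv_le (𝕜 := ℝ) (s := univ)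
      (fun x _ => (hφ.differentiable one_ne_zero).differentiableAt) (fun x _ => ?_) convex_univ
      (mem_univ z) (mem_univ y)
    have := hG x
    rwa [gradient, LinearIsometryEquiv.norm_map] at this
  have hWm : ∀ s, Measurable (F.weight ε s) := fun s =>
    (F.measurable_weight hv ε).comp measurable_prodMk_left
  have hW1 : ∀ s x, F.weight ε s x ≤ 1 := by
    intro s x
    rw [MaxFlow.weight]
    split_ifs with h
    · rw [← ENNReal.ofReal_one]
      apply ENNReal.ofReal_le_ofReal
      rw [Real.exp_le_one_iff, neg_nonpos]
      exact mul_nonneg hε.le (intervalIntegral.integral_nonneg h.1 fun r _ => norm_nonneg _)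
    · exact zero_le
  -- the defining identity of `μ t`, with the flow and the weight extended by zero
  have hμ' : ∀ t ∈ Ico (0:ℝ) T, ∀ ψ : Euc D → ℝ≥0∞, Measurable ψ →
      ∫⁻ y, ψ y ∂(μ t) = ∫⁻ x, F.weight ε t x * ψ (F.Xcut t x) ∂μ₀ := by
    intro t ht ψ hψ
    rw [hμ t ht ψ hψ, ← lintegral_indicator (F.measurableSet_lt_tau hv ht.1)]
    refine lintegral_congr fun x => ?_
    by_cases hx : t < F.tau x
    · rw [indicator_of_mem (by exact hx), MaxFlow.weight, if_pos ⟨ht.1, hx⟩, MaxFlow.Xcut,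
        if_pos hx]
    · rw [indicator_of_notMem (by exact hx), MaxFlow.weight, if_neg fun h => hx h.2, zero_mul]
  have hμmap : ∀ t ∈ Ico (0:ℝ) T,
      μ t = (μ₀.withDensity (F.weight ε t)).map (F.Xcut t) := by
    intro t ht
    have hXm := F.measurable_Xcut hv ht.1
    ext s hs
    have hi : Measurable (s.indicator (1 : Euc D → ℝ≥0∞)) := measurable_one.indicator hs
    rw [← lintegral_indicator_one hs, ← lintegral_indicator_one hs, hμ' t ht _ hi,
      lintegral_map hi hXm]
    exact (lintegral_withDensity_eq_lintegral_mul μ₀ (hWm t) (hi.comp hXm)).symm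
  have hIntg : ∀ t ∈ Ico (0:ℝ) T,
      ∫ y, φ y ∂(μ t) = ∫ x, (F.weight ε t x).toReal * φ (F.Xcut t x) ∂μ₀ := by
    intro t ht
    rw [hμmap t ht, integral_map (F.measurable_Xcut hv ht.1).aemeasurable
      hφ.continuous.aestronglyMeasurable,
      integral_withDensity_eq_integral_toReal_smul (hWm t)
        (Eventually.of_forall fun x => (hW1 t x).trans_lt ENNReal.one_lt_top)]
    rfl
  have hgI : ∀ t ∈ Ico (0:ℝ) T,
      Integrable (fun x => (F.weight ε t x).toReal * φ (F.Xcut t x)) μ₀ := by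
    intro t ht
    refine Integrable.of_bound ((hWm t).ennreal_toReal.mul
      (hφ.continuous.measurable.comp (F.measurable_Xcut hv ht.1))).aestronglyMeasurable B
      (Eventually.of_forall fun x => ?_)
    rw [norm_mul, Real.norm_of_nonneg ENNReal.toReal_nonneg]
    have h1 : (F.weight ε t x).toReal ≤ 1 := ENNReal.toReal_le_of_le_ofReal zero_le_one
      (by simpa using hW1 t x)
    exact (mul_le_mul h1 (hB _) (abs_nonneg _) zero_le_one).trans_eq (one_mul B)
  have ht₁ : t₁ ∈ Ico (0:ℝ) T := ⟨h0, h12.trans_lt h2T⟩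
  have ht₂ : t₂ ∈ Ico (0:ℝ) T := ⟨h0.trans h12, h2T⟩
  have hflux : ∫⁻ s in Ioc t₁ t₂, ∫⁻ x, ENNReal.ofReal ‖v s x‖ ∂(μ s) =
      ∫⁻ s in Ioc t₁ t₂, ∫⁻ x, F.flux ε s x ∂μ₀ := by
    refine setLIntegral_congr_fun measurableSet_Ioc fun s hs => ?_
    have hs' : s ∈ Ico (0:ℝ) T := ⟨h0.trans hs.1.le, hs.2.trans_lt h2T⟩
    exact hμ' s hs' _ (hv.locLip s ⟨hs'.1, hs'.2.le⟩).continuous.norm.measurable.ennreal_ofReal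
  rw [hIntg t₁ ht₁, hIntg t₂ ht₂, ← integral_sub (hgI t₂ ht₂) (hgI t₁ ht₁), hflux,
    lintegral_lintegral_swap (F.measurable_flux hv ε).aemeasurable, ← Real.norm_eq_abs,
    ofReal_norm]
  calc _ ≤ ∫⁻ x, ‖(F.weight ε t₂ x).toReal * φ (F.Xcut t₂ x) -
        (F.weight ε t₁ x).toReal * φ (F.Xcut t₁ x)‖ₑ ∂μ₀ := enorm_integral_le_lintegral_enorm _
    _ ≤ ∫⁻ x, ENNReal.ofReal ((1 + ε) * (B + L)) *
        (∫⁻ s in Ioc t₁ t₂, F.flux ε s x) ∂μ₀ := by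
        refine lintegral_mono fun x => ?_
        rw [← ofReal_norm, Real.norm_eq_abs]
        refine (F.pointwise_le hv hε hL0 hB hL x h0 h12 h2T).trans ?_
        gcongr
        nlinarith [mul_nonneg hε.le hL0]
    _ = _ := lintegral_const_mul _
        (((F.measurable_flux hv ε).comp measurable_swap).lintegral_prod_right')
end
end

section
/- Let t ∈ (0,T], let v and v^n (n ∈ ℕ) be admissible velocity fields on [0,t] × ℝ^D with, for every compact K ⊆ ℝ^D, sup_n ess sup_{s∈(0,t)} f_K^n(s) < ∞ (where f_K^n(s) = sup_{x∈K}|v_s^n(x)| + Lip(v_s^n, K)), and suppose v^n → v uniformly on K × [0,t] for every compact K ⊆ ℝ^D. For L > 0 set 𝔹_t(L) = { x ∈ ℝ^D : the solution X(·,x) of Ẋ = v_s(X), X_0 = x exists on [0,t] and X_s(x) ∈ D_L for all s ∈ [0,t] }, where D_L is the closed ball of radius L. Then for every δ > 0 there exists n_0 = n_0(t, L, δ) such that for all n ≥ n_0 and all x ∈ 𝔹_t(L): the solution X^n(·,x) of Ẋ^n = v_s^n(X^n), X_0^n = x exists on [0,t] and sup_{s∈[0,t]} |X_s^n(x) − X_s(x)|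 ≤ δ. -/
/-!
The trajectory `X` of the limit field `v` is an approximate solution of `Ẋⁿ = vⁿ(Xⁿ)`: as it stays
in the ball of radius `L`, its defect `x + ∫₀ˢ vⁿ_r(X_r) dr - X_s` is at most `ε t` once `vⁿ` is
`ε`-close to `v` on the ball of radius `L + δ`. The essential bound on `f_K^n` makes `vⁿ_s` bounded
and `C`-Lipschitz on that ball for almost every `s`, with `C` independent of `n`.

Picard iteration for `vⁿ` is started at `X` itself. The `k`-th increment is at most
`ε t (C s)^k / k!`, so all iterates stay within `ε t exp (C t) ≤ δ` of `X`, in particular they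
never leave the ball on which the Lipschitz bound is available. The iterates converge uniformly and
the limit is a solution which is `δ`-close to `X`. This gives existence on the whole of `[0,t]` and
the estimate at the same time, with no continuation or Grönwall argument
(`exists_sol_of_approx_sol`).
-/

open MeasureTheory Set Filter Topology

noncomputable section

/-- A solution of the ODE `Ẋ = v_s(X)`, `X_0 = x`, on the closed interval `[0, t]`, in
integral form. -/
def IsSolOnIcc {D : ℕ} (v : ℝ → Euc D → Euc D) (x : Euc D) (t : ℝ) (X : ℝ → Euc D) : Prop :=
  ContinuousOn X (Icc 0 t) ∧ ∀ s ∈ Icc (0:ℝ) t, X s = x + ∫ r in (0:ℝ)..s, v r (X r)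

open scoped NNReal

/-- A Carathéodory field composed with a continuous curve is measurable on `[0, t]`. -/
lemma IsAdmissible.aestronglyMeasurable_comp {D : ℕ} {t : ℝ} (ht : 0 ≤ t)
    {v : ℝ → Euc D → Euc D} (hv : IsAdmissible t v) {Z : ℝ → Euc D}
    (hZ : ContinuousOn Z (Icc 0 t)) :
    AEStronglyMeasurable (fun s => v s (Z s)) (volume.restrict (Ioc 0 t)) := by
  classical
  -- Off `[0, t]` neither `v s` nor `Z` need be continuous: replace them by `0` and by a
  -- continuous extension, respectively.
  let u : Euc D → ℝ → Euc D := fun x => (Icc (0:ℝ) t).indicator (fun s => v s x)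
  have hu : Measurable (Function.uncurry u) := by
    apply measurable_uncurry_of_continuous_of_measurable
    · intro s
      by_cases hs : s ∈ Icc (0:ℝ) t
      · simpa [u, indicator_of_mem hs] using (hv.locLip s hs).continuous
      · simpa [u, indicator_of_notMem hs] using continuous_const
    · exact fun x => (hv.meas x).indicator measurableSet_Icc
  have hZ' : Continuous (IccExtend ht ((Icc (0:ℝ) t).domRestrict Z)) :=
    (continuousOn_iff_continuous_domRestrict.1 hZ).Icc_extend'
  have hm := (hu.comp (hZ'.measurable.prodMk measurable_id)).aestronglyMeasurable
    (μ := volume.restrict (Ioc (0:ℝ) t))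
  refine hm.congr ?_
  filter_upwards [ae_restrict_mem measurableSet_Ioc] with s hs
  have hs' : s ∈ Icc (0:ℝ) t := Ioc_subset_Icc_self hs
  simp [u, hs', IccExtend_of_mem ht _ hs']

/-- For a locally Lipschitz slice, the supremum and the infimum in `fks` are genuine, so a bound on
`fks` yields a sup bound and a Lipschitz bound. -/
lemma bound_of_fks_le {D : ℕ} {v : ℝ → Euc D → Euc D} {K : Set (Euc D)} (hK : IsCompact K)
    {s : ℝ} (hv : LocallyLipschitz (v s)) {C : ℝ≥0} (h : fks v K s ≤ C) :
    (∀ x ∈ K, ‖v s x‖ ≤ C) ∧ LipschitzOnWith C (v s) K := by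
  have hsup0 : 0 ≤ sSup ((fun x => ‖v s x‖) '' K) := by
    apply Real.sSup_nonneg
    rintro _ ⟨x, -, rfl⟩
    exact norm_nonneg _
  have hlip0 : 0 ≤ lipOn (v s) K := Real.sInf_nonneg fun _ hC => hC.1
  have hbdd : BddAbove ((fun x => ‖v s x‖) '' K) :=
    (hK.image hv.continuous.norm).bddAbove
  unfold fks at h
  refine ⟨fun x hx => ?_, ?_⟩
  · have := le_csSup hbdd (mem_image_of_mem (fun x => ‖v s x‖) hx)
    linarith
  · obtain ⟨C₀, hC₀⟩ :=
      (hv.locallyLipschitzOn (s := K)).exists_lipschitzOnWith_of_compact hK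
    have hne : {C : ℝ | 0 ≤ C ∧ LipschitzOnWith C.toNNReal (v s) K}.Nonempty :=
      ⟨C₀, C₀.2, by simpa using hC₀⟩
    refine LipschitzOnWith.of_dist_le_mul fun x hx y hy => ?_
    refine le_of_forall_pos_le_add fun e he => ?_
    -- A Lipschitz constant within `e / (dist x y + 1)` of the infimum suffices for this pair.
    have hd : 0 < dist x y + 1 := by positivity
    obtain ⟨c, ⟨hc0, hc⟩, hce⟩ := exists_lt_of_csInf_lt hne
      (lt_add_of_pos_right _ (div_pos he hd) :
        sInf {C : ℝ | 0 ≤ C ∧ LipschitzOnWith C.toNNReal (v s) K} < _ + e / (dist x y + 1))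
    have h1 := hc.dist_le_mul x hx y hy
    rw [Real.coe_toNNReal _ hc0] at h1
    have hcC : c ≤ C + e / (dist x y + 1) := by
      unfold lipOn at h
      linarith
    calc dist (v s x) (v s y) ≤ c * dist x y := h1
      _ ≤ (C + e / (dist x y + 1)) * dist x y := by gcongr
      _ = C * dist x y + e * (dist x y / (dist x y + 1)) := by ring
      _ ≤ C * dist x y + e * 1 := by
        gcongr
        rw [div_le_one hd]
        linarith
      _ = C * dist x y + e := by ring

/-- The Picard iterates for the field `w` and the initial point `x`, started at the curve `Z`. -/
def picardIter {D : ℕ} (w : ℝ → Euc D → Euc D) (x : Euc D) (Z : ℝ → Euc D) : ℕ → ℝ → Euc D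
  | 0 => Z
  | k + 1 => fun s => x + ∫ r in (0:ℝ)..s, w r (picardIter w x Z k r)

/-- Near a curve `Z` which solves the integral equation up to an error `η` there is an exact
solution, at distance at most `η exp (C t)`, provided the field is bounded and `C`-Lipschitz on a
closed set `K` containing the corresponding tube around `Z`. -/
lemma exists_sol_of_approx_sol {D : ℕ} {t : ℝ} (ht : 0 ≤ t) {w : ℝ → Euc D → Euc D}
    {K : Set (Euc D)} (hK : IsClosed K) {C : ℝ≥0}
    (hm : ∀ Z : ℝ → Euc D, ContinuousOn Z (Icc 0 t) →
      AEStronglyMeasurable (fun s => w s (Z s)) (volume.restrict (Ioc 0 t)))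
    (hb : ∀ᵐ s, s ∈ Ioc (0:ℝ) t → (∀ x ∈ K, ‖w s x‖ ≤ C) ∧ LipschitzOnWith C (w s) K)
    {x : Euc D} {Z : ℝ → Euc D} (hZ : ContinuousOn Z (Icc 0 t)) {η : ℝ} (hη : 0 ≤ η)
    (happ : ∀ s ∈ Icc (0:ℝ) t, ‖(x + ∫ r in (0:ℝ)..s, w r (Z r)) - Z s‖ ≤ η)
    (hZK : ∀ s ∈ Icc (0:ℝ) t, Metric.closedBall (Z s) (η * Real.exp (C * t)) ⊆ K) :
    ∃ Y : ℝ → Euc D, IsSolOnIcc w x t Y ∧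
      ∀ s ∈ Icc (0:ℝ) t, ‖Y s - Z s‖ ≤ η * Real.exp (C * t) := by
  have hint : ∀ Y : ℝ → Euc D, ContinuousOn Y (Icc 0 t) → (∀ s ∈ Icc (0:ℝ) t, Y s ∈ K) →
      ∀ s ∈ Icc (0:ℝ) t, IntervalIntegrable (fun r => w r (Y r)) volume 0 s := by
    intro Y hY hYK s hs
    rw [intervalIntegrable_iff_integrableOn_Ioc_of_le hs.1]
    have hI : IntegrableOn (fun r => w r (Y r)) (Ioc 0 t) volume := by
      refine Integrable.mono' (g := fun _ => (C:ℝ)) (integrable_const _) (hm Y hY) ?_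
      rw [ae_restrict_iff' measurableSet_Ioc]
      filter_upwards [hb] with r hr hrt
      exact (hr hrt).1 _ (hYK r (Ioc_subset_Icc_self hrt))
    exact hI.mono_set (Ioc_subset_Ioc_right hs.2)
  have hprim : ∀ Y : ℝ → Euc D, ContinuousOn Y (Icc 0 t) → (∀ s ∈ Icc (0:ℝ) t, Y s ∈ K) →
      ContinuousOn (fun s => x + ∫ r in (0:ℝ)..s, w r (Y r)) (Icc 0 t) := by
    intro Y hY hYK
    have := intervalIntegral.continuousOn_primitive_interval'
      (hint Y hY hYK t ⟨ht, le_rfl⟩) left_mem_uIcc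
    rw [uIcc_of_le ht] at this
    exact continuousOn_const.add this
  set P := picardIter w x Z with hP
  have hmem : ∀ (k : ℕ) (s : ℝ) (y : Euc D), s ∈ Icc (0:ℝ) t →
      ‖y - Z s‖ ≤ η * ∑ j ∈ Finset.range k, (C * s) ^ j / (j.factorial : ℝ) → y ∈ K := by
    intro k s y hs hy
    apply hZK s hs
    rw [mem_closedBall_iff_norm]
    have h0 : 0 ≤ (C:ℝ) * s := mul_nonneg C.2 hs.1
    calc ‖y - Z s‖ ≤ _ := hy
      _ ≤ η * Real.exp (C * s) := by
        gcongr
        exact Real.sum_le_exp_of_nonneg h0 k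
      _ ≤ η * Real.exp (C * t) := by
        gcongr
        exact hs.2
  have hind : ∀ k : ℕ, ContinuousOn (P k) (Icc 0 t) ∧ ∀ s ∈ Icc (0:ℝ) t,
      ‖P k s - Z s‖ ≤ η * ∑ j ∈ Finset.range k, (C * s) ^ j / (j.factorial : ℝ) ∧
      ‖P (k + 1) s - P k s‖ ≤ η * ((C * s) ^ k / (k.factorial : ℝ)) := by
    intro k
    induction k with
    | zero =>
      refine ⟨hZ, fun s hs => ⟨by simp [hP, picardIter], ?_⟩⟩
      simpa [hP, picardIter] using happ s hs
    | succ k ih =>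
      obtain ⟨ihc, ih⟩ := ih
      have hKk : ∀ s ∈ Icc (0:ℝ) t, P k s ∈ K := fun s hs => hmem k s _ hs (ih s hs).1
      have hc : ContinuousOn (P (k + 1)) (Icc 0 t) := hprim _ ihc hKk
      have hd : ∀ s ∈ Icc (0:ℝ) t, ‖P (k + 1) s - Z s‖ ≤
          η * ∑ j ∈ Finset.range (k + 1), (C * s) ^ j / (j.factorial : ℝ) := by
        intro s hs
        rw [Finset.sum_range_succ, mul_add]
        have := norm_sub_le_norm_sub_add_norm_sub (P (k + 1) s) (P k s) (Z s)
        linarith [(ih s hs).1, (ih s hs).2]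
      have hKk' : ∀ s ∈ Icc (0:ℝ) t, P (k + 1) s ∈ K := fun s hs => hmem _ s _ hs (hd s hs)
      refine ⟨hc, fun s hs => ⟨hd s hs, ?_⟩⟩
      have e : P (k + 1 + 1) s - P (k + 1) s =
          ∫ r in (0:ℝ)..s, (w r (P (k + 1) r) - w r (P k r)) := by
        rw [intervalIntegral.integral_sub (hint _ hc hKk' s hs) (hint _ ihc hKk s hs)]
        change (x + ∫ r in (0:ℝ)..s, w r (P (k + 1) r)) - (x + ∫ r in (0:ℝ)..s, w r (P k r)) = _
        abel
      rw [e]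
      have hle : ‖∫ r in (0:ℝ)..s, (w r (P (k + 1) r) - w r (P k r))‖ ≤
          ∫ r in (0:ℝ)..s, (C * η * C ^ k / (k.factorial : ℝ)) * r ^ k := by
        refine intervalIntegral.norm_integral_le_of_norm_le hs.1 ?_
          (Continuous.intervalIntegrable (by fun_prop) _ _)
        filter_upwards [hb] with r hr hrs
        have hrt : r ∈ Ioc (0:ℝ) t := ⟨hrs.1, hrs.2.trans hs.2⟩
        have hrt' := Ioc_subset_Icc_self hrt
        have h1 := (hr hrt).2.dist_le_mul _ (hKk' r hrt') _ (hKk r hrt')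
        rw [dist_eq_norm, dist_eq_norm] at h1
        calc _ ≤ C * ‖P (k + 1) r - P k r‖ := h1
          _ ≤ C * (η * ((C * r) ^ k / (k.factorial : ℝ))) := by
            gcongr
            exact (ih r hrt').2
          _ = _ := by rw [mul_pow]; ring
      refine hle.trans_eq ?_
      rw [intervalIntegral.integral_const_mul, integral_pow, Nat.factorial_succ]
      have : ((k:ℝ) + 1) ≠ 0 := by positivity
      have : (k.factorial : ℝ) ≠ 0 := by positivity
      push_cast
      field_simp
      ring
  have hPK : ∀ k, ∀ s ∈ Icc (0:ℝ) t, P k s ∈ K :=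
    fun k s hs => hmem k s _ hs ((hind k).2 s hs).1
  let a : ℕ → ℝ := fun k => η * ((C * t) ^ k / (k.factorial : ℝ))
  have ha : Summable a := (Real.summable_pow_div_factorial _).mul_left η
  have hstep : ∀ s ∈ Icc (0:ℝ) t, ∀ k, dist (P k s) (P k.succ s) ≤ a k := by
    intro s hs k
    rw [dist_comm, dist_eq_norm]
    have h0 : 0 ≤ s := hs.1
    refine ((hind k).2 s hs).2.trans ?_
    simp only [a]
    gcongr
    exact hs.2
  have hlim : ∀ s, ∃ y, s ∈ Icc (0:ℝ) t → Tendsto (fun k => P k s) atTop (𝓝 y) := by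
    intro s
    by_cases hs : s ∈ Icc (0:ℝ) t
    · obtain ⟨y, hy⟩ := cauchySeq_tendsto_of_complete
        (cauchySeq_of_dist_le_of_summable a (hstep s hs) ha)
      exact ⟨y, fun _ => hy⟩
    · exact ⟨0, fun h => absurd h hs⟩
  choose Y hY using hlim
  have hYK : ∀ s ∈ Icc (0:ℝ) t, Y s ∈ K := fun s hs =>
    hK.mem_of_tendsto (hY s hs) (Eventually.of_forall fun k => hPK k s hs)
  have hunif : TendstoUniformlyOn P Y atTop (Icc 0 t) := by
    rw [Metric.tendstoUniformlyOn_iff]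
    intro e he
    have h0 := tendsto_sum_nat_add a
    filter_upwards [h0.eventually (gt_mem_nhds he)] with n hn s hs
    have := dist_le_tsum_of_dist_le_of_tendsto a (hstep s hs) ha (hY s hs) n
    rw [dist_comm]
    simp only [add_comm n] at this
    exact this.trans_lt hn
  have hYc : ContinuousOn Y (Icc 0 t) :=
    hunif.continuousOn (Frequently.of_forall fun k => (hind k).1)
  refine ⟨Y, ⟨hYc, fun s hs => ?_⟩, fun s hs => ?_⟩
  · have hT : Tendsto (fun k => P (k + 1) s) atTop (𝓝 (x + ∫ r in (0:ℝ)..s, w r (Y r))) := by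
      refine Tendsto.const_add x ?_
      have hsub : uIoc 0 s ⊆ Ioc (0:ℝ) t := by
        rw [uIoc_of_le hs.1]
        exact Ioc_subset_Ioc_right hs.2
      refine intervalIntegral.tendsto_integral_filter_of_dominated_convergence (fun _ => (C:ℝ))
        (Eventually.of_forall fun k => ?_) (Eventually.of_forall fun k => ?_)
        (by simp) ?_
      · exact (hm _ (hind k).1).mono_measure (Measure.restrict_mono hsub le_rfl)
      · filter_upwards [hb] with r hr hrs
        exact (hr (hsub hrs)).1 _ (hPK k r (Ioc_subset_Icc_self (hsub hrs)))
      · filter_upwards [hb] with r hr hrs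
        have hrt := Ioc_subset_Icc_self (hsub hrs)
        have hcw := (hr (hsub hrs)).2.continuousOn (Y r) (hYK r hrt)
        exact hcw.tendsto.comp (tendsto_nhdsWithin_iff.2
          ⟨hY r hrt, Eventually.of_forall fun k => hPK k r hrt⟩)
    exact tendsto_nhds_unique ((tendsto_add_atTop_iff_nat 1).2 (hY s hs)) hT
  · refine le_of_tendsto ((hY s hs).sub_const (Z s)).norm (Eventually.of_forall fun k => ?_)
    have h0 : 0 ≤ (C:ℝ) * s := mul_nonneg C.2 hs.1
    refine ((hind k).2 s hs).1.trans ?_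
    gcongr
    exact (Real.sum_le_exp_of_nonneg h0 k).trans
      (Real.exp_le_exp.2 (mul_le_mul_of_nonneg_left hs.2 C.2))

/-- closeness of trajectories: if `v^n → v` uniformly on compact sets with
uniformly essentially bounded `f_K^n`, then for large `n`, trajectories of `v^n` starting
in `𝔹_t(L)` exist on `[0,t]` and stay `δ`-close to those of `v`. -/
theorem stmt15 {D : ℕ} (hD : 0 < D) {T t : ℝ} (hT : 0 < T) (ht : t ∈ Ioc (0:ℝ) T)
    (v : ℝ → Euc D → Euc D) (vn : ℕ → ℝ → Euc D → Euc D)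
    (hv : IsAdmissible t v) (hvn : ∀ n, IsAdmissible t (vn n))
    (hbdd : ∀ K : Set (Euc D), IsCompact K → ∃ C : ℝ,
      ∀ n, ∀ᵐ s ∂(volume.restrict (Ioc (0:ℝ) t)), fks (vn n) K s ≤ C)
    (hunif : ∀ K : Set (Euc D), IsCompact K →
      TendstoUniformlyOn (fun n z => vn n z.1 z.2) (fun z : ℝ × Euc D => v z.1 z.2)
        atTop (Icc (0:ℝ) t ×ˢ K))
    (L : ℝ) (hL : 0 < L) :
    ∀ δ : ℝ, 0 < δ → ∃ n₀ : ℕ, ∀ n, n₀ ≤ n → ∀ x : Euc D, ∀ X : ℝ → Euc D,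
      IsSolOnIcc v x t X → (∀ s ∈ Icc (0:ℝ) t, X s ∈ Metric.closedBall (0 : Euc D) L) →
      ∃ Xn : ℝ → Euc D, IsSolOnIcc (vn n) x t Xn ∧
        ∀ s ∈ Icc (0:ℝ) t, ‖Xn s - X s‖ ≤ δ := by
  intro δ hδ
  have ht0 : 0 ≤ t := ht.1.le
  have htpos : 0 < t := ht.1
  set K : Set (Euc D) := Metric.closedBall 0 (L + δ) with hKdef
  have hK : IsCompact K := isCompact_closedBall _ _
  obtain ⟨C₀, hC₀⟩ := hbdd K hK
  set C : ℝ≥0 := C₀.toNNReal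
  have hb : ∀ n, ∀ᵐ s, s ∈ Ioc (0:ℝ) t →
      (∀ x ∈ K, ‖vn n s x‖ ≤ C) ∧ LipschitzOnWith C (vn n s) K := by
    intro n
    have h := hC₀ n
    rw [ae_restrict_iff' measurableSet_Ioc] at h
    filter_upwards [h] with s hs hst
    exact bound_of_fks_le hK ((hvn n).locLip s (Ioc_subset_Icc_self hst))
      ((hs hst).trans (Real.le_coe_toNNReal C₀))
  -- Chosen so that `ε * t * exp (C * t) = δ`.
  set ε : ℝ := δ / (t * Real.exp (C * t)) with hε
  have hεpos : 0 < ε := by positivity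
  have hεδ : ε * t * Real.exp (C * t) = δ := by
    rw [hε]
    field_simp
  obtain ⟨n₀, hn₀⟩ := eventually_atTop.1 (Metric.tendstoUniformlyOn_iff.1 (hunif K hK) ε hεpos)
  refine ⟨n₀, fun n hn x X hX hXL => ?_⟩
  have hXL' : ∀ s ∈ Icc (0:ℝ) t, ‖X s‖ ≤ L := fun s hs => by simpa using hXL s hs
  have hXK : ∀ s ∈ Icc (0:ℝ) t, X s ∈ K := fun s hs => by
    rw [hKdef, mem_closedBall_zero_iff]
    linarith [hXL' s hs]
  have hclose : ∀ s ∈ Icc (0:ℝ) t, ‖vn n s (X s) - v s (X s)‖ ≤ ε := fun s hs => by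
    have := hn₀ n hn (s, X s) ⟨hs, hXK s hs⟩
    rw [dist_comm, dist_eq_norm] at this
    exact this.le
  have hi1 : IntegrableOn (fun s => vn n s (X s)) (Ioc 0 t) volume := by
    refine Integrable.mono' (g := fun _ => (C:ℝ)) (integrable_const _)
      ((hvn n).aestronglyMeasurable_comp ht0 hX.1) ?_
    rw [ae_restrict_iff' measurableSet_Ioc]
    filter_upwards [hb n] with s hs hst
    exact (hs hst).1 _ (hXK s (Ioc_subset_Icc_self hst))
  have hi2 : IntegrableOn (fun s => v s (X s)) (Ioc 0 t) volume := by
    refine Integrable.mono' (g := fun _ => (C:ℝ) + ε) (integrable_const _)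
      (hv.aestronglyMeasurable_comp ht0 hX.1) ?_
    rw [ae_restrict_iff' measurableSet_Ioc]
    filter_upwards [hb n] with s hs hst
    have h1 := (hs hst).1 _ (hXK s (Ioc_subset_Icc_self hst))
    have h2 := hclose s (Ioc_subset_Icc_self hst)
    have h3 := norm_le_norm_add_norm_sub (vn n s (X s)) (v s (X s))
    linarith
  have happ : ∀ s ∈ Icc (0:ℝ) t, ‖(x + ∫ r in (0:ℝ)..s, vn n r (X r)) - X s‖ ≤ ε * t := by
    intro s hs
    have j1 : IntervalIntegrable (fun r => vn n r (X r)) volume 0 s :=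
      (intervalIntegrable_iff_integrableOn_Ioc_of_le hs.1).2
        (hi1.mono_set (Ioc_subset_Ioc_right hs.2))
    have j2 : IntervalIntegrable (fun r => v r (X r)) volume 0 s :=
      (intervalIntegrable_iff_integrableOn_Ioc_of_le hs.1).2
        (hi2.mono_set (Ioc_subset_Ioc_right hs.2))
    have e : (x + ∫ r in (0:ℝ)..s, vn n r (X r)) - X s =
        ∫ r in (0:ℝ)..s, (vn n r (X r) - v r (X r)) := by
      rw [hX.2 s hs, intervalIntegral.integral_sub j1 j2]
      abel
    rw [e]
    have := intervalIntegral.norm_integral_le_of_norm_le_const (a := 0) (b := s) (C := ε)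
      (f := fun r => vn n r (X r) - v r (X r)) fun r hr => by
        rw [uIoc_of_le hs.1] at hr
        exact hclose r ⟨hr.1.le, hr.2.trans hs.2⟩
    rw [sub_zero, abs_of_nonneg hs.1] at this
    exact this.trans (mul_le_mul_of_nonneg_left hs.2 hεpos.le)
  obtain ⟨Xn, hsol, hdist⟩ := exists_sol_of_approx_sol ht0 Metric.isClosed_closedBall
    (fun Z hZ => (hvn n).aestronglyMeasurable_comp ht0 hZ) (hb n) hX.1
    (mul_nonneg hεpos.le ht0) happ (fun s hs => by
      rw [hεδ]
      refine Metric.closedBall_subset_closedBall' ?_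
      rw [dist_zero_right]
      linarith [hXL' s hs])
  exact ⟨Xn, hsol, fun s hs => hεδ ▸ hdist s hs⟩
end
end
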